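/- arXiv:1311.1625 — 2 statements merged into one kernel-verified Lean document; each statement's English description precedes it below -/
import Mathlib

section
/- Let P ⊂ ℝ^n be a smooth full-dimensional lattice polytope. Then cd(P) ≥ (n+3)/2 if and only if P is unimodularly equivalent to a Cayley sum Cayley(R_0, …, R_t)_π of normally equivalent smooth lattice polytopes with t + 1 = cd(P) and t > n/2. -/
noncomputable section

open MeasureTheory Pointwise

/-- A point of `ℝ^n` is a lattice point if all its coordinates are integers. -/
def IsLatticePt {n : ℕ} (x : Fin n → ℝ) : Prop := ∀ i, ∃ z : ℤ, x i = (z : ℝ)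

/-- A lattice polytope is the convex hull of a finite set of lattice points. -/
def IsLatticePolytope {n : ℕ} (P : Set (Fin n → ℝ)) : Prop :=
  ∃ V : Finset (Fin n → ℝ), (∀ v ∈ V, IsLatticePt v) ∧
    P = convexHull ℝ (↑V : Set (Fin n → ℝ))

/-- A rational polytope is the convex hull of a finite set of rational points. -/
def IsRatPolytope {n : ℕ} (P : Set (Fin n → ℝ)) : Prop :=
  ∃ V : Finset (Fin n → ℝ), (∀ v ∈ V, ∀ i, ∃ q : ℚ, v i = (q : ℝ)) ∧
    P = convexHull ℝ (↑V : Set (Fin n → ℝ))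

/-- The vertices `0, e_1, …, e_t` of the standard unimodular simplex `Δ_t ⊆ ℝ^t`. -/
def stdSimplexVert (t : ℕ) (k : Fin (t + 1)) : Fin t → ℝ :=
  fun j => if (k : ℕ) = (j : ℕ) + 1 then 1 else 0

/-- The standard unimodular simplex `Δ_t = conv(0, e_1, …, e_t) ⊆ ℝ^t`. -/
def unimodSimplex (t : ℕ) : Set (Fin t → ℝ) := convexHull ℝ (Set.range (stdSimplexVert t))

/-- The interior of the dilate `s • P` contains a lattice point. -/
def HasInteriorLatticePt {n : ℕ} (P : Set (Fin n → ℝ)) (s : ℕ) : Prop :=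
  ∃ x ∈ interior ((s : ℝ) • P), IsLatticePt x

/-- The codegree `cd(P)`: the least positive integer `t` such that the interior of `t • P`
contains a lattice point. -/
def codeg {n : ℕ} (P : Set (Fin n → ℝ)) : ℕ :=
  sInf {t : ℕ | 0 < t ∧ HasInteriorLatticePt P t}

/-- Pairing of an integer vector with a real vector. -/
def iprod {n : ℕ} (a : Fin n → ℤ) (x : Fin n → ℝ) : ℝ := ∑ i, (a i : ℝ) * x i

/-- An integer vector is primitive if it is nonzero and its coordinates have no common
non-unit divisor. -/
def IsPrimitive {n : ℕ} (a : Fin n → ℤ) : Prop :=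
  a ≠ 0 ∧ ∀ d : ℤ, (∀ i, d ∣ a i) → IsUnit d

/-- `(a, b)` is a facet inequality of `P ⊆ ℝ^n`: `a` is a primitive integer inner normal,
`b = min_{x ∈ P} ⟨a, x⟩`, and the corresponding face has dimension `n - 1`. -/
def IsFacetIneq {n : ℕ} (P : Set (Fin n → ℝ)) (a : Fin n → ℤ) (b : ℝ) : Prop :=
  IsPrimitive a ∧ (∀ x ∈ P, b ≤ iprod a x) ∧
  {x ∈ P | iprod a x = b}.Nonempty ∧
  Module.finrank ℝ ↥(vectorSpan ℝ {x ∈ P | iprod a x = b}) = n - 1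

/-- The adjoint polytope `P^(s) = {x : ⟨a_F, x⟩ ≥ b_F + s for all facets F}`. -/
def adjointPoly {n : ℕ} (P : Set (Fin n → ℝ)) (s : ℝ) : Set (Fin n → ℝ) :=
  {x | ∀ a b, IsFacetIneq P a b → b + s ≤ iprod a x}

/-- The set `{s > 0 : P^(s) ≠ ∅}`; the ℚ-codegree is `μ(P) = (sSup (muSet P))⁻¹`. -/
def muSet {n : ℕ} (P : Set (Fin n → ℝ)) : Set ℝ :=
  {s : ℝ | 0 < s ∧ (adjointPoly P s).Nonempty}

/-- `F` is a (nonempty, exposed) face of the polytope `P`; with `u = 0` this includes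
`P` itself. -/
def IsFace {n : ℕ} (P F : Set (Fin n → ℝ)) : Prop :=
  F.Nonempty ∧ ∃ (u : (Fin n → ℝ) →ₗ[ℝ] ℝ) (c : ℝ),
    (∀ x ∈ P, c ≤ u x) ∧ F = {x ∈ P | u x = c}

/-- The dimension of a face (or polytope): the rank of its direction vector space. -/
def fdim {n : ℕ} (F : Set (Fin n → ℝ)) : ℕ := Module.finrank ℝ ↥(vectorSpan ℝ F)

/-- `vol` is the relative lattice volume of `F`: the Lebesgue volume of the image of `F`
under an affine isomorphism of `aff F` with `ℝ^{dim F}` carrying `(aff F) ∩ ℤ^n` onto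
`ℤ^{dim F}`. -/
def HasRelVol {n : ℕ} (F : Set (Fin n → ℝ)) (vol : ℝ) : Prop :=
  ∃ T : (Fin n → ℝ) →ᵃ[ℝ] (Fin (fdim F) → ℝ),
    Set.BijOn T (affineSpan ℝ F : Set (Fin n → ℝ)) Set.univ ∧
    T '' ((affineSpan ℝ F : Set (Fin n → ℝ)) ∩ {x | IsLatticePt x}) = {y | IsLatticePt y} ∧
    vol = (volume (T '' F)).toReal

/-- The alternating face sum `Σ_F (-1)^{n - dim F} (dim F + 1)! Vol(F)`. -/
def faceSum {n : ℕ} (𝓕 : Finset (Set (Fin n → ℝ))) (volf : Set (Fin n → ℝ) → ℝ) : ℝ :=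
  ∑ F ∈ 𝓕, (-1 : ℝ) ^ (n - fdim F) * (Nat.factorial (fdim F + 1) : ℝ) * volf F

/-- The alternating sum over all nonempty faces of `P` of
`(-1)^{n - dim F} (dim F + 1)! Vol(F)` vanishes. -/
def FaceSumZero {n : ℕ} (P : Set (Fin n → ℝ)) : Prop :=
  ∃ (𝓕 : Finset (Set (Fin n → ℝ))) (volf : Set (Fin n → ℝ) → ℝ),
    (∀ F, F ∈ 𝓕 ↔ IsFace P F) ∧ (∀ F ∈ 𝓕, HasRelVol F (volf F)) ∧
    faceSum 𝓕 volf = 0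

/-- A polytope `R ⊆ ℝ^n` (of dimension `d = fdim R`) is smooth: at each vertex there are
exactly `d` edges, whose primitive integer direction vectors form a ℤ-basis of the
lattice `(vectorSpan R) ∩ ℤ^n`. -/
def IsSmoothPoly {n : ℕ} (R : Set (Fin n → ℝ)) : Prop :=
  ∀ v ∈ Set.extremePoints ℝ R,
    ∃ (w : Fin (fdim R) → (Fin n → ℤ)) (c : Fin (fdim R) → ℝ),
      (∀ i, 0 < c i) ∧ (∀ i, IsPrimitive (w i)) ∧
      LinearIndependent ℝ (fun i => ((fun j => ((w i j : ℝ))) : Fin n → ℝ)) ∧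
      (∀ i, ((fun j => ((w i j : ℝ))) : Fin n → ℝ) ∈ vectorSpan ℝ R) ∧
      (∀ z : Fin n → ℤ, ((fun j => (z j : ℝ)) : Fin n → ℝ) ∈ vectorSpan ℝ R →
        ∃ m : Fin (fdim R) → ℤ,
          ((fun j => (z j : ℝ)) : Fin n → ℝ) =
            ∑ i, (m i : ℝ) • ((fun j => ((w i j : ℝ))) : Fin n → ℝ)) ∧
      (∀ F : Set (Fin n → ℝ), (IsFace R F ∧ v ∈ F ∧ fdim F = 1) ↔
        ∃ i, F = segment ℝ v (v + c i • ((fun j => ((w i j : ℝ))) : Fin n → ℝ)))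

/-- The real-linear map `ℝ^n → ℝ^t` induced by an integer matrix. -/
def matMap {t n : ℕ} (A : Matrix (Fin t) (Fin n) ℤ) : (Fin n → ℝ) → (Fin t → ℝ) :=
  fun x k => ∑ j, (A k j : ℝ) * x j

/-- The piece `R_k = P ∩ π_ℝ^{-1}(v_k)` of a Cayley sum over the `k`-th vertex of `Δ_t`. -/
def cayleyPiece {t n : ℕ} (A : Matrix (Fin t) (Fin n) ℤ) (P : Set (Fin n → ℝ))
    (k : Fin (t + 1)) : Set (Fin n → ℝ) :=
  {x ∈ P | matMap A x = stdSimplexVert t k}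

/-- Two polytopes are normally equivalent (have the same normal fan): for all linear
functionals `u, v`, the minimizing face of `u` equals that of `v` on `R` precisely when the
same holds on `S`. -/
def NormEquiv {n : ℕ} (R S : Set (Fin n → ℝ)) : Prop :=
  ∀ u v : (Fin n → ℝ) →ₗ[ℝ] ℝ,
    ({x ∈ R | ∀ y ∈ R, u x ≤ u y} = {x ∈ R | ∀ y ∈ R, v x ≤ v y}) ↔
    ({x ∈ S | ∀ y ∈ S, u x ≤ u y} = {x ∈ S | ∀ y ∈ S, v x ≤ v y})

/-- `Q` is the Cayley sum, via the surjective lattice projection `A : ℤ^n → ℤ^t`, of the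
normally equivalent polytopes `R_k = Q ∩ π_ℝ^{-1}(v_k)`: `π_ℝ` maps `Q` onto `Δ_t`. -/
def IsCayleyWith {n t : ℕ} (Q : Set (Fin n → ℝ)) (A : Matrix (Fin t) (Fin n) ℤ) : Prop :=
  (∀ y : Fin t → ℤ, ∃ x : Fin n → ℤ, A.mulVec x = y) ∧
  matMap A '' Q = unimodSimplex t ∧
  ∀ k l : Fin (t + 1), NormEquiv (cayleyPiece A Q k) (cayleyPiece A Q l)

/-- The unimodular affine map `x ↦ Ux + w`. -/
def unimodMap {n : ℕ} (U : Matrix (Fin n) (Fin n) ℤ) (w : Fin n → ℤ) :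
    (Fin n → ℝ) → (Fin n → ℝ) :=
  fun x i => (∑ j, (U i j : ℝ) * x j) + (w i : ℝ)

/-- The set `{s > 0 : P^(s) has the same normal fan as P}`; the nef value is
`τ(P) = (sSup (tauSet P))⁻¹`. -/
def tauSet {n : ℕ} (P : Set (Fin n → ℝ)) : Set ℝ :=
  {s : ℝ | 0 < s ∧ NormEquiv (adjointPoly P s) P}

/-!
At a vertex `v` of a smooth polytope the primitive edge directions `e_k` and the inner facet normals
`a_k` are dual bases. Let `s = cd(P) - 1`. As `s P` has no interior lattice point, each lattice
point `s v + ∑ z_k e_k` lies on or beyond some facet of `s P`; for `z = 1` call such a facet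
`r x + b = 0` blocking at `v`. Choose a vertex and a blocking facet of minimal height `r v + b`. If
`r` decreases along an edge, then either the same facet blocks at the other end, or the facet first
met there blocks at `v`; minimality forces `r e_k ≥ -1` for all `k`, and then `n < 2 s` forces
height `1`. If some `r e_j` were positive, a choice of `z_k` weighted towards `e_j` would produce an
interior lattice point. So `r = -∑_{k ∈ N} a_k` for a set `N` of at least `s` facets at `v`.

The facet forms `a_k (x - v)`, `k ∈ N`, together with `r x + b` add up to `1`, and hence are the
barycentric coordinates of a lattice projection of `P` to a unimodular simplex. They are at least
`1` at an interior lattice point of `cd(P) P`, where they add up to `cd(P)`, so `|N| = s`. A vertex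
of one fibre over a vertex of the simplex is joined by an edge to every other fibre. Its two
ends have the same edge directions inside the fibres, which makes the fibres normally equivalent.
The converse is arithmetic.
-/

/-! ### Lattice vectors and dual bases -/

/-- The inclusion `ℤ^n → ℝ^n`. -/
def castVec {n : ℕ} : (Fin n → ℤ) →+ (Fin n → ℝ) := (Int.castAddHom ℝ).compLeft (Fin n)

/-- The real linear functional on `ℝ^n` with integer coefficient vector `a`. -/
def intForm {n : ℕ} : (Fin n → ℤ) →+ Module.Dual ℝ (Fin n → ℝ) :=
  (dotProductBilin ℝ ℝ).toAddMonoidHom.comp castVec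

section CastVec

variable {n : ℕ}

theorem castVec_injective : Function.Injective (castVec (n := n)) :=
  Int.cast_injective.comp_left

theorem castVec_zsmul (k : ℤ) (z : Fin n → ℤ) : castVec (k • z) = (k : ℝ) • castVec z := by
  rw [map_zsmul, Int.cast_smul_eq_zsmul]

theorem isLatticePt_iff_exists_castVec {x : Fin n → ℝ} :
    IsLatticePt x ↔ ∃ z, castVec z = x :=
  ⟨fun hx ↦ (Classical.skolem.1 hx).imp fun _ hz ↦ funext fun i ↦ (hz i).symm,
    fun ⟨z, hz⟩ i ↦ ⟨z i, hz ▸ rfl⟩⟩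

theorem isLatticePt_castVec (z : Fin n → ℤ) : IsLatticePt (castVec z) :=
  isLatticePt_iff_exists_castVec.2 ⟨z, rfl⟩

theorem intForm_apply (a : Fin n → ℤ) (x : Fin n → ℝ) : intForm a x = castVec a ⬝ᵥ x := rfl

theorem intForm_castVec (a z : Fin n → ℤ) : intForm a (castVec z) = ((a ⬝ᵥ z : ℤ) : ℝ) :=
  ((Int.castRingHom ℝ).map_dotProduct a z).symm

end CastVec

/-- Two families of coordinate vectors are dual bases of each other for the dot product. -/
def IsDualPair {R ι : Type*} [CommRing R] [Fintype ι] [DecidableEq ι] (a w : ι → ι → R) : Prop :=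
  ∀ i j, a i ⬝ᵥ w j = if i = j then 1 else 0

namespace IsDualPair

section CommRing

variable {R ι : Type*} [CommRing R] [Fintype ι] [DecidableEq ι] {a w : ι → ι → R}

theorem symm (h : IsDualPair a w) : IsDualPair w a := fun i j ↦ by
  rw [dotProduct_comm, h j i]
  simp only [eq_comm]

theorem sum_smul (h : IsDualPair a w) (z : ι → R) : ∑ i, (a i ⬝ᵥ z) • w i = z := by
  have hmul : Matrix.of a * (Matrix.of w).transpose = 1 := by
    ext i j
    simpa [Matrix.mul_apply, Matrix.one_apply, dotProduct] using h i j
  calc ∑ i, (a i ⬝ᵥ z) • w i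
      = (Matrix.of w).transpose.mulVec ((Matrix.of a).mulVec z) := by
        ext j
        simp [Matrix.mulVec, dotProduct, mul_comm]
    _ = z := by rw [Matrix.mulVec_mulVec, mul_eq_one_comm.1 hmul, Matrix.one_mulVec]

theorem ext (h : IsDualPair a w) {x y : ι → R} (hxy : ∀ i, a i ⬝ᵥ x = a i ⬝ᵥ y) : x = y := by
  rw [← h.sum_smul x, ← h.sum_smul y]
  simp only [hxy]

theorem linearIndependent (h : IsDualPair a w) : LinearIndependent R w :=
  Fintype.linearIndependent_iff.2 fun g hg i ↦ by
    simpa [dotProduct_sum, dotProduct_smul, h i] using congrArg (a i ⬝ᵥ ·) hg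

theorem exists_of_span (h : ∀ z : ι → R, ∃ m : ι → R, z = ∑ i, m i • w i) :
    ∃ a, IsDualPair a w := by
  choose m hm using h
  have hmul : Matrix.of (fun j ↦ m (Pi.single j 1)) * Matrix.of w = 1 := by
    ext j k
    simpa [Matrix.mul_apply, Matrix.one_apply, Pi.single_apply, eq_comm] using
      (congrFun (hm (Pi.single j 1)) k).symm
  have hcomm := mul_eq_one_comm.1 hmul
  refine ⟨fun k j ↦ m (Pi.single j 1) k, fun k i ↦ ?_⟩
  rw [dotProduct_comm]
  simpa [Matrix.mul_apply, Matrix.one_apply, dotProduct, eq_comm] using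
    congrFun (congrFun hcomm i) k

end CommRing

variable {n : ℕ} {a w : Fin n → Fin n → ℤ}

theorem map_castVec (h : IsDualPair a w) :
    IsDualPair (fun i ↦ castVec (a i)) (fun i ↦ castVec (w i)) := fun i j ↦ by
  rw [← intForm_apply, intForm_castVec, h i j]
  split_ifs <;> simp

theorem apply_eq_sum (h : IsDualPair a w) (u : Module.Dual ℝ (Fin n → ℝ)) (x : Fin n → ℝ) :
    u x = ∑ i, intForm (a i) x * u (castVec (w i)) := by
  conv_lhs => rw [← h.map_castVec.sum_smul x]
  simp [intForm_apply]

end IsDualPair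

/-! ### Faces of polytopes -/

section Faces

variable {n : ℕ} {P F G R : Set (Fin n → ℝ)}

theorem IsFace.subset (hF : IsFace P F) : F ⊆ P := by
  obtain ⟨-, u, c, -, rfl⟩ := hF
  exact Set.sep_subset _ _

theorem IsFace.of_subset (hF : IsFace P F) (hFR : F ⊆ R) (hRP : R ⊆ P) : IsFace R F := by
  obtain ⟨hne, u, c, hc, rfl⟩ := hF
  exact ⟨hne, u, c, fun x hx ↦ hc x (hRP hx), Set.Subset.antisymm
    (fun x hx ↦ ⟨hFR hx, hx.2⟩) fun x hx ↦ ⟨hRP hx.1, hx.2⟩⟩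

theorem IsFace.isExposed (hF : IsFace P F) : IsExposed ℝ P F := by
  obtain ⟨hne, u, c, hc, rfl⟩ := hF
  obtain ⟨x₀, hx₀, hx₀c⟩ := hne
  refine fun _ ↦ ⟨-LinearMap.toContinuousLinearMap u, Set.ext fun x ↦ and_congr_right fun hx ↦ ?_⟩
  simp only [neg_apply, LinearMap.coe_toContinuousLinearMap', neg_le_neg_iff]
  exact ⟨fun h y hy ↦ h ▸ hc y hy, fun h ↦ le_antisymm (hx₀c ▸ h x₀ hx₀) (hc x hx)⟩

theorem IsFace.extremePoints_eq (hF : IsFace P F) :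
    F.extremePoints ℝ = F ∩ P.extremePoints ℝ :=
  hF.isExposed.isExtreme.extremePoints_eq

theorem isFace_setOf_minimal (u : Module.Dual ℝ (Fin n → ℝ)) {v : Fin n → ℝ} (hv : v ∈ P)
    (hmin : ∀ x ∈ P, u v ≤ u x) : IsFace P {x ∈ P | u x = u v} :=
  ⟨⟨v, hv, rfl⟩, u, u v, hmin, rfl⟩

theorem IsFace.eq_convexHull {V : Set (Fin n → ℝ)} (hV : V.Finite)
    (hF : IsFace (convexHull ℝ V) F) : F = convexHull ℝ (V ∩ F) := by
  have hconvex : Convex ℝ F := hF.isExposed.convex (convex_convexHull ℝ V)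
  refine Set.Subset.antisymm ?_ (convexHull_min Set.inter_subset_right hconvex)
  have hcompact : IsCompact F := hF.isExposed.isCompact (hV.isCompact_convexHull ℝ)
  rw [← closure_convexHull_extremePoints hcompact hconvex]
  refine closure_minimal (convexHull_mono fun x hx ↦ ?_)
    ((hV.subset Set.inter_subset_left).isClosed_convexHull ℝ)
  rw [hF.extremePoints_eq] at hx
  rw [closure_convexHull_extremePoints hcompact hconvex]
  exact ⟨extremePoints_convexHull_subset hx.2, hx.1⟩

theorem IsFace.isLatticePolytope (hP : IsLatticePolytope P) (hF : IsFace P F) :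
    IsLatticePolytope F := by
  obtain ⟨V, hV, rfl⟩ := hP
  classical
  refine ⟨V.filter (· ∈ F), fun v hv ↦ hV v (Finset.mem_filter.1 hv).1, ?_⟩
  rw [Finset.coe_filter]
  exact hF.eq_convexHull V.finite_toSet

theorem isFace_convexHull_setOf {V : Set (Fin n → ℝ)} (hV : V.Finite)
    {u : Module.Dual ℝ (Fin n → ℝ)} {c : ℝ} (hle : ∀ v ∈ V, c ≤ u v)
    (hne : {v ∈ V | u v = c}.Nonempty) :
    IsFace (convexHull ℝ V) (convexHull ℝ {v ∈ V | u v = c}) := by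
  have hface : IsFace (convexHull ℝ V) {x ∈ convexHull ℝ V | u x = c} :=
    ⟨hne.mono fun v hv ↦ ⟨subset_convexHull ℝ V hv.1, hv.2⟩, u, c,
      convexHull_min hle (convex_halfSpace_ge u.isLinear c), rfl⟩
  have heq : V ∩ {x ∈ convexHull ℝ V | u x = c} = {v ∈ V | u v = c} :=
    Set.ext fun v ↦ ⟨fun hv ↦ ⟨hv.1, hv.2.2⟩, fun hv ↦ ⟨hv.1, subset_convexHull ℝ V hv.1, hv.2⟩⟩
  exact heq ▸ hface.eq_convexHull hV ▸ hface

theorem IsLatticePolytope.exists_finite_eq_convexHull (hP : IsLatticePolytope P) :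
    ∃ V : Set (Fin n → ℝ), V.Finite ∧ P = convexHull ℝ V :=
  hP.elim fun V hV ↦ ⟨V, V.finite_toSet, hV.2⟩

theorem IsFace.trans (hP : IsLatticePolytope P) (hF : IsFace P F) (hG : IsFace F G) :
    IsFace P G := by
  obtain ⟨V, hfin, rfl⟩ := hP.exists_finite_eq_convexHull
  have hGV : G = convexHull ℝ (V ∩ F ∩ G) :=
    IsFace.eq_convexHull (hfin.subset Set.inter_subset_left)
      (hF.eq_convexHull hfin ▸ hG)
  obtain ⟨hne, g, d, hd, hGg⟩ := hG
  obtain ⟨-, f, c, hc, hFf⟩ := hF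
  have hV : ∀ v ∈ V, v ∈ convexHull ℝ V := fun v hv ↦ subset_convexHull ℝ _ hv
  -- A large multiple of `f` makes `g` irrelevant away from `F`.
  obtain ⟨M, hM⟩ : ∃ M : ℝ, ∀ v ∈ V, 0 < f v - c → d - g v < M * (f v - c) :=
    Filter.Eventually.exists <| (Filter.eventually_all_finite hfin).2 fun v _ ↦
      Filter.eventually_imp_distrib_left.2 fun h ↦
        (Filter.tendsto_id.atTop_mul_const h).eventually_gt_atTop (d - g v)
  have key : ∀ v ∈ V, M * c + d ≤ (M • f + g) v ∧ ((M • f + g) v = M * c + d → v ∈ F ∩ G) := by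
    intro v hv
    simp only [LinearMap.add_apply, LinearMap.smul_apply, smul_eq_mul]
    rcases (hc v (hV v hv)).eq_or_lt with h | h
    · have hvF : v ∈ F := hFf ▸ ⟨hV v hv, h.symm⟩
      rw [← h]
      exact ⟨by linarith [hd v hvF], fun h' ↦ ⟨hvF, hGg ▸ ⟨hvF, by linarith⟩⟩⟩
    · have := hM v hv (sub_pos.2 h)
      constructor <;> intros <;> linarith
  have heq : V ∩ F ∩ G = {v ∈ V | (M • f + g) v = M * c + d} := by
    refine Set.ext fun v ↦ ⟨fun ⟨⟨hv, hvF⟩, hvG⟩ ↦ ⟨hv, ?_⟩,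
      fun hv ↦ ⟨⟨hv.1, ((key v hv.1).2 hv.2).1⟩, ((key v hv.1).2 hv.2).2⟩⟩
    rw [hFf] at hvF
    rw [hGg] at hvG
    simp [hvF.2, hvG.2]
  rw [hGV, heq]
  exact isFace_convexHull_setOf hfin (fun v hv ↦ (key v hv).1)
    (convexHull_nonempty_iff.1 (heq ▸ hGV ▸ hne))

theorem IsLatticePolytope.convex (hP : IsLatticePolytope P) : Convex ℝ P := by
  obtain ⟨V, -, rfl⟩ := hP
  exact convex_convexHull ℝ _

theorem IsLatticePolytope.isCompact (hP : IsLatticePolytope P) : IsCompact P := by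
  obtain ⟨V, hfin, rfl⟩ := hP.exists_finite_eq_convexHull
  exact hfin.isCompact_convexHull ℝ

theorem IsLatticePolytope.exists_castVec (hP : IsLatticePolytope P) {x : Fin n → ℝ}
    (hx : x ∈ P.extremePoints ℝ) : ∃ v, castVec v = x := by
  obtain ⟨V, hV, rfl⟩ := hP
  exact isLatticePt_iff_exists_castVec.1 (hV x (extremePoints_convexHull_subset hx))

theorem exists_extremePoint_forall_le (hP : IsCompact P) (hne : P.Nonempty)
    (u : Module.Dual ℝ (Fin n → ℝ)) : ∃ v ∈ P.extremePoints ℝ, ∀ x ∈ P, u v ≤ u x := by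
  obtain ⟨x₀, hx₀, hmin⟩ := hP.exists_isMinOn hne u.continuous_of_finiteDimensional.continuousOn
  have hF := isFace_setOf_minimal u hx₀ (isMinOn_iff.1 hmin)
  obtain ⟨v, hv⟩ := (hF.isExposed.isCompact hP).extremePoints_nonempty hF.1
  rw [hF.extremePoints_eq] at hv
  exact ⟨v, hv.2, fun x hx ↦ hv.1.2.le.trans (hmin hx)⟩

end Faces

/-! ### Vertex figures -/

section VertexFigure

variable {n : ℕ} {V : Set (Fin n → ℝ)} {v : Fin n → ℝ}
  {h : Module.Dual ℝ (Fin n → ℝ)}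

theorem exists_forall_lt_of_mem_extremePoints (hV : V.Finite)
    (hv : v ∈ (convexHull ℝ V).extremePoints ℝ) :
    ∃ h : Module.Dual ℝ (Fin n → ℝ), ∀ g ∈ V, g ≠ v → h v < h g := by
  have hsub : convexHull ℝ (V \ {v}) ⊆ convexHull ℝ V \ {v} :=
    convexHull_min (Set.sdiff_subset_sdiff_left (subset_convexHull ℝ V))
      ((convex_convexHull ℝ V).mem_extremePoints_iff_convex_sdiff.1 hv).2
  obtain ⟨f, s, hfv, hf⟩ := geometric_hahn_banach_point_closed (convex_convexHull ℝ (V \ {v}))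
    (hV.sdiff.isClosed_convexHull ℝ) fun hmem ↦ (hsub hmem).2 rfl
  exact ⟨f.toLinearMap, fun g hg hgv ↦ hfv.trans (hf g (subset_convexHull ℝ _ ⟨hg, hgv⟩))⟩

/-- The section at height one of the cone spanned by the points of `V` seen from the apex `v`,
heights being measured by the functional `h`. -/
def vertexFigure (V : Set (Fin n → ℝ)) (v : Fin n → ℝ) (h : Module.Dual ℝ (Fin n → ℝ)) :
    Set (Fin n → ℝ) :=
  (fun g ↦ (h g - h v)⁻¹ • (g - v)) '' (V \ {v})

theorem exists_mem_vertexFigure (hh : ∀ g ∈ V, g ≠ v → h v < h g) {g : Fin n → ℝ}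
    (hg : g ∈ V) (hgv : g ≠ v) :
    ∃ c : ℝ, 0 < c ∧ ∃ e ∈ vertexFigure V v h, g = v + c • e := by
  have hpos : 0 < h g - h v := sub_pos.2 (hh g hg hgv)
  exact ⟨_, hpos, _, ⟨g, ⟨hg, hgv⟩, rfl⟩, by rw [smul_inv_smul₀ hpos.ne', add_sub_cancel]⟩

theorem exists_add_smul_mem_of_mem_vertexFigure (hh : ∀ g ∈ V, g ≠ v → h v < h g) {e : Fin n → ℝ}
    (he : e ∈ vertexFigure V v h) :
    ∃ c : ℝ, 0 < c ∧ v + c • e ∈ V := by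
  obtain ⟨g, ⟨hg, hgv⟩, rfl⟩ := he
  have hpos : 0 < h g - h v := sub_pos.2 (hh g hg hgv)
  exact ⟨_, hpos, by rwa [smul_inv_smul₀ hpos.ne', add_sub_cancel]⟩

theorem apply_eq_one_of_mem_vertexFigure (hh : ∀ g ∈ V, g ≠ v → h v < h g) {e : Fin n → ℝ}
    (he : e ∈ vertexFigure V v h) :
    h e = 1 := by
  obtain ⟨g, ⟨hg, hgv⟩, rfl⟩ := he
  rw [map_smul, map_sub, smul_eq_mul, inv_mul_cancel₀ (sub_pos.2 (hh g hg hgv)).ne']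

theorem fdim_convexHull_ray {S : Set (Fin n → ℝ)} {e : Fin n → ℝ} {c : ℝ} (he : e ≠ 0)
    (hc : c ≠ 0) (hv : v ∈ S) (hve : v + c • e ∈ S) (hS : ∀ g ∈ S, ∃ d : ℝ, g = v + d • e) :
    fdim (convexHull ℝ S) = 1 := by
  have hspan : vectorSpan ℝ S = ℝ ∙ e := by
    rw [vectorSpan_eq_span_vsub_set_right ℝ hv]
    refine le_antisymm (Submodule.span_le.2 ?_) ((Submodule.span_singleton_le_iff_mem _ _).2 ?_)
    · rintro _ ⟨g, hg, rfl⟩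
      obtain ⟨d, rfl⟩ := hS g hg
      simpa using Submodule.smul_mem _ d (Submodule.mem_span_singleton_self e)
    · have : c • e ∈ Submodule.span ℝ ((· -ᵥ v) '' S) := Submodule.subset_span ⟨_, hve, by simp⟩
      simpa [hc] using Submodule.smul_mem _ c⁻¹ this
  rw [fdim, ← direction_affineSpan, affineSpan_convexHull, direction_affineSpan, hspan,
    finrank_span_singleton he]

theorem exists_edge_of_mem_extremePoints_vertexFigure (hV : V.Finite) (hv : v ∈ V)
    (hh : ∀ g ∈ V, g ≠ v → h v < h g) {e : Fin n → ℝ}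
    (he : e ∈ (convexHull ℝ (vertexFigure V v h)).extremePoints ℝ) :
    ∃ F, IsFace (convexHull ℝ V) F ∧ v ∈ F ∧ fdim F = 1 ∧ ∃ c : ℝ, 0 < c ∧ v + c • e ∈ F := by
  have heG : e ∈ vertexFigure V v h := extremePoints_convexHull_subset he
  have hhe : h e = 1 := apply_eq_one_of_mem_vertexFigure hh heG
  obtain ⟨f, hf⟩ := exists_forall_lt_of_mem_extremePoints (hV.sdiff.image _) he
  -- On the ray from `v` through `e'`, the functional `f - f e • h` has slope `f e' - f e`.
  have hu : ∀ g ∈ V, (f - f e • h) v ≤ (f - f e • h) g ∧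
      ((f - f e • h) g = (f - f e • h) v → ∃ d : ℝ, g = v + d • e) := by
    intro g hg
    rcases eq_or_ne g v with rfl | hgv
    · exact ⟨le_rfl, fun _ ↦ ⟨0, by simp⟩⟩
    obtain ⟨c, hc, e', he', rfl⟩ := exists_mem_vertexFigure hh hg hgv
    have hslope : (f - f e • h) (v + c • e') = (f - f e • h) v + c * (f e' - f e) := by
      simp only [LinearMap.sub_apply, LinearMap.smul_apply, map_add, map_smul, smul_eq_mul,
        apply_eq_one_of_mem_vertexFigure hh he']
      ring
    rw [hslope]
    rcases eq_or_ne e' e with rfl | hne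
    · exact ⟨by simp, fun _ ↦ ⟨c, rfl⟩⟩
    · have := mul_pos hc (sub_pos.2 (hf e' he' hne))
      exact ⟨by linarith, fun _ ↦ by linarith⟩
  obtain ⟨c, hc, hcV⟩ := exists_add_smul_mem_of_mem_vertexFigure hh heG
  have hcF : v + c • e ∈ {x ∈ V | (f - f e • h) x = (f - f e • h) v} := by
    refine ⟨hcV, ?_⟩
    simp only [LinearMap.sub_apply, LinearMap.smul_apply, map_add, map_smul, smul_eq_mul, hhe]
    ring
  exact ⟨_, isFace_convexHull_setOf hV (fun g hg ↦ (hu g hg).1) ⟨v, hv, rfl⟩,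
    subset_convexHull ℝ _ ⟨hv, rfl⟩,
    fdim_convexHull_ray (fun h0 ↦ by simp [h0] at hhe) hc.ne' ⟨hv, rfl⟩ hcF
      fun g hg ↦ (hu g hg.1).2 hg.2, c, hc, subset_convexHull ℝ _ hcF⟩

theorem IsLatticePolytope.le_of_forall_edge_le {P : Set (Fin n → ℝ)} (hP : IsLatticePolytope P)
    (hv : v ∈ P.extremePoints ℝ) (φ : Module.Dual ℝ (Fin n → ℝ))
    (hφ : ∀ F, IsFace P F → v ∈ F → fdim F = 1 → ∀ x ∈ F, φ v ≤ φ x) {x : Fin n → ℝ}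
    (hx : x ∈ P) : φ v ≤ φ x := by
  obtain ⟨V, hfin, rfl⟩ := hP.exists_finite_eq_convexHull
  have hvV : v ∈ V := extremePoints_convexHull_subset hv
  obtain ⟨h, hh⟩ := exists_forall_lt_of_mem_extremePoints hfin hv
  refine convexHull_min (t := {y | φ v ≤ φ y}) (fun g hg ↦ ?_)
    (convex_halfSpace_ge φ.isLinear _) hx
  rcases eq_or_ne g v with hgv | hgv
  · exact (congrArg φ hgv).ge
  obtain ⟨c, hc, e, he, rfl⟩ := exists_mem_vertexFigure hh hg hgv
  obtain ⟨e₀, he₀, hmin⟩ := exists_extremePoint_forall_le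
    ((hfin.sdiff.image _).isCompact_convexHull ℝ)
    ⟨e, subset_convexHull ℝ (vertexFigure V v h) he⟩ φ
  obtain ⟨F, hF, hvF, hdim, d, hd, hdF⟩ :=
    exists_edge_of_mem_extremePoints_vertexFigure hfin hvV hh he₀
  have hd₀ : φ v ≤ φ v + d * φ e₀ := by simpa using hφ F hF hvF hdim _ hdF
  have he₀_nonneg : 0 ≤ φ e₀ := nonneg_of_mul_nonneg_right (by linarith) hd
  simpa using mul_nonneg hc.le (he₀_nonneg.trans (hmin e (subset_convexHull ℝ _ he)))

end VertexFigure

/-! ### Vertices of smooth polytopes -/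

/-- Smooth full-dimensional lattice polytopes in `ℝ^n`. -/
structure IsSmoothLatticePolytope {n : ℕ} (P : Set (Fin n → ℝ)) : Prop where
  isLatticePolytope : IsLatticePolytope P
  affineSpan_eq_top : affineSpan ℝ P = ⊤
  isSmoothPoly : IsSmoothPoly P

/-- The local structure of a smooth polytope `P` at its vertex `v`: the primitive edge directions,
the dual basis of inner facet normals, and the lattice lengths of the edges, which lead to the
neighbouring vertices `v + length i • dir i`. -/
structure SmoothVertex {n : ℕ} (P : Set (Fin n → ℝ)) (v : Fin n → ℤ) where
  dir : Fin n → Fin n → ℤ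
  normal : Fin n → Fin n → ℤ
  length : Fin n → ℤ
  isDualPair : IsDualPair normal dir
  mem_extremePoints : castVec v ∈ P.extremePoints ℝ
  le_normal : ∀ i, ∀ x ∈ P, intForm (normal i) (castVec v) ≤ intForm (normal i) x
  one_le_length : ∀ i, 1 ≤ length i
  add_length_smul_dir_mem : ∀ i, castVec (v + length i • dir i) ∈ P.extremePoints ℝ
  add_dir_mem : ∀ i, castVec (v + dir i) ∈ P
  isEdge_iff : ∀ F, (IsFace P F ∧ castVec v ∈ F ∧ fdim F = 1) ↔
    ∃ i, F = segment ℝ (castVec v) (castVec (v + length i • dir i))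

section Existence

variable {n : ℕ} {P : Set (Fin n → ℝ)} {v : Fin n → ℤ}

theorem IsSmoothLatticePolytope.exists_edge_basis (hP : IsSmoothLatticePolytope P)
    (hv : castVec v ∈ P.extremePoints ℝ) :
    ∃ (w : Fin n → Fin n → ℤ) (c : Fin n → ℝ), (∀ i, 0 < c i) ∧
      (∀ z : Fin n → ℤ, ∃ m : Fin n → ℤ, z = ∑ i, m i • w i) ∧
      ∀ F, (IsFace P F ∧ castVec v ∈ F ∧ fdim F = 1) ↔
        ∃ i, F = segment ℝ (castVec v) (castVec v + c i • castVec (w i)) := by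
  have hspan : vectorSpan ℝ P = ⊤ := by
    rw [← direction_affineSpan, hP.affineSpan_eq_top, AffineSubspace.direction_top]
  have hdim : fdim P = n := by rw [fdim, hspan, finrank_top, Module.finrank_fin_fun]
  have hsmooth := hP.isSmoothPoly _ hv
  rw [hdim] at hsmooth
  obtain ⟨w, c, hc, -, -, -, hgen, hedge⟩ := hsmooth
  refine ⟨w, c, hc, fun z ↦ ?_, hedge⟩
  obtain ⟨m, hm⟩ := hgen z (hspan ▸ Submodule.mem_top)
  refine ⟨m, castVec_injective ?_⟩
  simp only [map_sum, castVec_zsmul]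
  exact hm

theorem IsLatticePolytope.exists_add_zsmul_eq (hP : IsLatticePolytope P) {a w : Fin n → ℤ}
    (haw : a ⬝ᵥ w = 1) {c : ℝ} (hc : 0 < c)
    (hF : IsFace P (segment ℝ (castVec v) (castVec v + c • castVec w))) :
    ∃ l : ℤ, 1 ≤ l ∧ castVec (v + l • w) = castVec v + c • castVec w ∧
      castVec (v + l • w) ∈ P.extremePoints ℝ ∧ castVec (v + w) ∈ P := by
  have haw' : intForm a (castVec w) = 1 := by rw [intForm_castVec, haw, Int.cast_one]
  obtain ⟨y, hy, hmin⟩ := exists_extremePoint_forall_le (hF.isExposed.isCompact hP.isCompact)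
    hF.1 (-intForm a)
  have hyP := (hF.extremePoints_eq ▸ hy).2
  rw [← convexHull_pair] at hy
  rcases extremePoints_convexHull_subset hy with rfl | rfl
  · have := hmin _ (right_mem_segment ..)
    simp only [LinearMap.neg_apply, map_add, map_smul, haw', smul_eq_mul] at this
    linarith
  obtain ⟨y, hy⟩ := hP.exists_castVec hyP
  have hcl : c = (a ⬝ᵥ (y - v) : ℤ) := by
    rw [← intForm_castVec, map_sub, hy, add_sub_cancel_left, map_smul, haw', smul_eq_mul, mul_one]
  have hl : (1 : ℤ) ≤ a ⬝ᵥ (y - v) := Int.cast_pos.1 (hcl ▸ hc)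
  have hnbr : castVec (v + (a ⬝ᵥ (y - v)) • w) = castVec v + c • castVec w := by
    rw [map_add, castVec_zsmul, ← hcl]
  refine ⟨_, hl, hnbr, hnbr ▸ hyP, hF.subset ?_⟩
  rw [segment_eq_image', map_add]
  exact ⟨c⁻¹, ⟨by positivity, inv_le_one_of_one_le₀ (hcl ▸ mod_cast hl)⟩,
    by simp only [add_sub_cancel_left, inv_smul_smul₀ hc.ne']⟩

theorem IsSmoothLatticePolytope.nonempty_smoothVertex (hP : IsSmoothLatticePolytope P)
    (hv : castVec v ∈ P.extremePoints ℝ) : Nonempty (SmoothVertex P v) := by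
  obtain ⟨w, c, hc, hgen, hedge⟩ := hP.exists_edge_basis hv
  obtain ⟨a, ha⟩ := IsDualPair.exists_of_span hgen
  choose l hl hnbr hext hadd using fun i ↦
    hP.isLatticePolytope.exists_add_zsmul_eq (by rw [ha i i, if_pos rfl]) (hc i)
      ((hedge _).2 ⟨i, rfl⟩).1
  refine ⟨w, a, l, ha, hv, fun i x hx ↦ ?_, hl, hext, hadd, by simpa only [hnbr] using hedge⟩
  refine hP.isLatticePolytope.le_of_forall_edge_le hv _ (fun F hF hvF hdim y hy ↦ ?_) hx
  obtain ⟨j, rfl⟩ := (hedge F).1 ⟨hF, hvF, hdim⟩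
  rw [segment_eq_image'] at hy
  obtain ⟨θ, ⟨hθ, -⟩, rfl⟩ := hy
  have hij : 0 ≤ intForm (a i) (castVec (w j)) := by
    rw [intForm_castVec, ha i j]
    split_ifs <;> simp
  rw [add_sub_cancel_left, map_add, map_smul, map_smul]
  exact le_add_of_nonneg_right (smul_nonneg hθ (smul_nonneg (hc j).le hij))

end Existence

namespace SmoothVertex

variable {n : ℕ} {P : Set (Fin n → ℝ)} {v : Fin n → ℤ}

theorem mem (S : SmoothVertex P v) : castVec v ∈ P :=
  S.mem_extremePoints.1

/-- Relabelling of the edges at a vertex. -/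
def reindex (S : SmoothVertex P v) (e : Equiv.Perm (Fin n)) : SmoothVertex P v where
  dir := S.dir ∘ e
  normal := S.normal ∘ e
  length := S.length ∘ e
  isDualPair i j := by simp [S.isDualPair (e i) (e j)]
  mem_extremePoints := S.mem_extremePoints
  le_normal i := S.le_normal (e i)
  one_le_length i := S.one_le_length (e i)
  add_length_smul_dir_mem i := S.add_length_smul_dir_mem (e i)
  add_dir_mem i := S.add_dir_mem (e i)
  isEdge_iff F := (S.isEdge_iff F).trans e.surjective.exists

end SmoothVertex

namespace SmoothVertex

section Coord

variable {n : ℕ} {P : Set (Fin n → ℝ)} {v : Fin n → ℤ} (S : SmoothVertex P v)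

/-- The coordinates with respect to the edge basis at the vertex `v`, with origin `v`. They are
nonnegative on `P`. -/
def coord (i : Fin n) (x : Fin n → ℝ) : ℝ := intForm (S.normal i) (x - castVec v)

theorem coord_nonneg (i : Fin n) {x : Fin n → ℝ} (hx : x ∈ P) : 0 ≤ S.coord i x := by
  rw [coord, map_sub]
  exact sub_nonneg.2 (S.le_normal i x hx)

theorem apply_eq_add_sum (u : Module.Dual ℝ (Fin n → ℝ)) (x : Fin n → ℝ) :
    u x = u (castVec v) + ∑ i, S.coord i x * u (castVec (S.dir i)) := by
  rw [← sub_eq_iff_eq_add', ← map_sub]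
  exact S.isDualPair.apply_eq_sum u _

variable {S}

theorem apply_dir_nonneg {u : Module.Dual ℝ (Fin n → ℝ)} (hu : ∀ x ∈ P, u (castVec v) ≤ u x)
    (i : Fin n) : 0 ≤ u (castVec (S.dir i)) := by
  simpa using hu _ (S.add_dir_mem i)

theorem apply_eq_iff {f : Module.Dual ℝ (Fin n → ℝ)} (hf : ∀ x ∈ P, f (castVec v) ≤ f x)
    {x : Fin n → ℝ} (hx : x ∈ P) :
    f x = f (castVec v) ↔ ∀ i, f (castVec (S.dir i)) ≠ 0 → S.coord i x = 0 := by
  rw [S.apply_eq_add_sum f x, add_eq_left, Finset.sum_eq_zero_iff_of_nonneg fun i _ ↦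
    mul_nonneg (S.coord_nonneg i hx) (apply_dir_nonneg hf i)]
  simp only [Finset.mem_univ, true_implies, mul_eq_zero, or_iff_not_imp_right, ne_eq]

theorem forall_le_on_face_iff {f : Module.Dual ℝ (Fin n → ℝ)}
    (hf : ∀ x ∈ P, f (castVec v) ≤ f x) (u : Module.Dual ℝ (Fin n → ℝ)) :
    (∀ x ∈ P, f x = f (castVec v) → u (castVec v) ≤ u x) ↔
      ∀ i, f (castVec (S.dir i)) = 0 → 0 ≤ u (castVec (S.dir i)) := by
  refine ⟨fun h i hi ↦ ?_, fun h x hx hfx ↦ ?_⟩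
  · simpa using h _ (S.add_dir_mem i) (by rw [map_add, map_add, hi, add_zero])
  · rw [S.apply_eq_add_sum u x]
    refine le_add_of_nonneg_right (Finset.sum_nonneg fun i _ ↦ ?_)
    rcases eq_or_ne (f (castVec (S.dir i))) 0 with hi | hi
    · exact mul_nonneg (S.coord_nonneg i hx) (h i hi)
    · rw [(apply_eq_iff hf hx).1 hfx i hi, zero_mul]

end Coord

end SmoothVertex

/-! ### Facets -/

/-- The integral affine form `r x + b` defines a facet of `P`: it is nonnegative on `P`, its linear
part is primitive, and every integral affine form vanishing on its zero set in `P` is an integral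
multiple of it. -/
structure IsFacetForm {n : ℕ} (P : Set (Fin n → ℝ)) (r : Fin n → ℤ) (b : ℤ) : Prop where
  nonneg : ∀ x ∈ P, 0 ≤ intForm r x + b
  exists_dotProduct_eq_one : ∃ z, r ⬝ᵥ z = 1
  exists_eq_zsmul : ∀ r' (b' : ℤ), (∀ x ∈ P, intForm r x + b = 0 → intForm r' x + b' = 0) →
    ∃ m : ℤ, r' = m • r ∧ b' = m * b

section FacetForm

variable {n : ℕ} {P : Set (Fin n → ℝ)} {v r : Fin n → ℤ} {b : ℤ}

theorem IsFacetForm.dotProduct_add_nonneg (hr : IsFacetForm P r b) {z : Fin n → ℤ}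
    (hz : castVec z ∈ P) : 0 ≤ r ⬝ᵥ z + b := by
  have := hr.nonneg _ hz
  rw [intForm_castVec] at this
  exact_mod_cast this

theorem IsFacetForm.intForm_le (hr : IsFacetForm P r b) (h0 : r ⬝ᵥ v + b = 0) {x : Fin n → ℝ}
    (hx : x ∈ P) : intForm r (castVec v) ≤ intForm r x := by
  have hv : intForm r (castVec v) + b = 0 := by
    rw [intForm_castVec]
    exact_mod_cast h0
  linarith [hr.nonneg x hx]

theorem SmoothVertex.isFacetForm_normal (S : SmoothVertex P v) (i : Fin n) :
    IsFacetForm P (S.normal i) (-(S.normal i ⬝ᵥ v)) where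
  nonneg x hx := by
    have := S.le_normal i x hx
    rw [intForm_castVec] at this
    push_cast
    linarith
  exists_dotProduct_eq_one := ⟨S.dir i, by rw [S.isDualPair i i, if_pos rfl]⟩
  exists_eq_zsmul r' b' h := by
    have hzero (z : Fin n → ℤ) (hz : castVec z ∈ P) (hiz : S.normal i ⬝ᵥ z = S.normal i ⬝ᵥ v) :
        r' ⬝ᵥ z + b' = 0 := by
      have := h _ hz (by rw [intForm_castVec, hiz]; push_cast; ring)
      rw [intForm_castVec] at this
      exact_mod_cast this
    have hv : r' ⬝ᵥ v + b' = 0 := hzero v S.mem rfl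
    have hr' : r' = (r' ⬝ᵥ S.dir i) • S.normal i := by
      rw [dotProduct_comm]
      conv_lhs => rw [← S.isDualPair.symm.sum_smul r']
      refine Finset.sum_eq_single i (fun k _ hk ↦ ?_) fun h ↦ absurd (Finset.mem_univ i) h
      have := hzero _ (S.add_dir_mem k) (by
        rw [dotProduct_add, S.isDualPair i k, if_neg hk.symm, add_zero])
      rw [dotProduct_add] at this
      rw [dotProduct_comm, show r' ⬝ᵥ S.dir k = 0 by linarith, zero_smul]
    refine ⟨r' ⬝ᵥ S.dir i, hr', ?_⟩
    have : r' ⬝ᵥ v = (r' ⬝ᵥ S.dir i) * (S.normal i ⬝ᵥ v) := by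
      conv_lhs => rw [hr', smul_dotProduct, smul_eq_mul]
    linarith

theorem SmoothVertex.exists_normal_eq (S : SmoothVertex P v) (hr : IsFacetForm P r b)
    (h0 : r ⬝ᵥ v + b = 0) : ∃ i, S.normal i = r := by
  have hmin : ∀ x ∈ P, intForm r (castVec v) ≤ intForm r x := fun x ↦ hr.intForm_le h0
  have hdir (i) : 0 ≤ r ⬝ᵥ S.dir i := by
    have := S.apply_dir_nonneg hmin i
    rw [intForm_castVec] at this
    exact_mod_cast this
  obtain ⟨i, hi⟩ : ∃ i, r ⬝ᵥ S.dir i ≠ 0 := by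
    by_contra! hall
    obtain ⟨z, hz⟩ := hr.exists_dotProduct_eq_one
    rw [← S.isDualPair.symm.sum_smul r] at hz
    simp [dotProduct_comm _ r, hall] at hz
  obtain ⟨m, hm, -⟩ := hr.exists_eq_zsmul (S.normal i) (-(S.normal i ⬝ᵥ v)) fun x hx hx0 ↦ by
    have hxv : intForm r x = intForm r (castVec v) := by
      rw [intForm_castVec, eq_neg_of_add_eq_zero_left hx0, eq_neg_of_add_eq_zero_left h0,
        Int.cast_neg]
    have := (S.apply_eq_iff hmin hx).1 hxv i (by rwa [intForm_castVec, Int.cast_ne_zero])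
    rwa [coord, map_sub, intForm_castVec, sub_eq_add_neg, ← Int.cast_neg] at this
  have hmul : m * (r ⬝ᵥ S.dir i) = 1 := by
    rw [← smul_eq_mul, ← smul_dotProduct, ← hm, S.isDualPair i i, if_pos rfl]
  rw [Int.eq_one_of_mul_eq_one_left (hdir i) hmul, mul_one] at hmul
  exact ⟨i, by rw [hm, hmul, one_smul]⟩

end FacetForm

/-! ### Adjacent vertices -/

/-- `S'` describes the vertex at the other end of the edge `i` of `S`, labelled compatibly: the two
vertices share all facets but the `i`-th. -/
structure SmoothVertex.IsAdjacent {n : ℕ} {P : Set (Fin n → ℝ)} {v v' : Fin n → ℤ}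
    (S : SmoothVertex P v) (S' : SmoothVertex P v') (i : Fin n) : Prop where
  eq_add : v' = v + S.length i • S.dir i
  normal_eq : ∀ k ≠ i, S'.normal k = S.normal k

section Adjacent

variable {n : ℕ} {P : Set (Fin n → ℝ)} {v v' r : Fin n → ℤ} {b : ℤ}
  {S : SmoothVertex P v} {S' : SmoothVertex P v'} {i : Fin n}

namespace SmoothVertex

theorem normal_dotProduct_le (S : SmoothVertex P v) (i : Fin n) {z : Fin n → ℤ}
    (hz : castVec z ∈ P) : S.normal i ⬝ᵥ v ≤ S.normal i ⬝ᵥ z := by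
  linarith [(S.isFacetForm_normal i).dotProduct_add_nonneg hz]

theorem exists_isAdjacent (hP : IsSmoothLatticePolytope P) (S : SmoothVertex P v) (i : Fin n) :
    ∃ S' : SmoothVertex P (v + S.length i • S.dir i), S.IsAdjacent S' i := by
  obtain ⟨S'⟩ := hP.nonempty_smoothVertex (S.add_length_smul_dir_mem i)
  have hshared (k : {k // k ≠ i}) : ∃ j, S'.normal j = S.normal k :=
    S'.exists_normal_eq (S.isFacetForm_normal k) (by
      rw [dotProduct_add, dotProduct_smul, S.isDualPair k i, if_neg k.2]
      simp)
  choose f hf using hshared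
  have hinj : Function.Injective f := fun k k' h ↦ Subtype.ext <| by
    have hdual := S.isDualPair k k'
    rw [← hf k, h, hf k', S.isDualPair k' k', if_pos rfl] at hdual
    by_contra hne
    rw [if_neg hne] at hdual
    exact one_ne_zero hdual
  refine ⟨S'.reindex (Equiv.ofInjective f hinj).extendSubtype, rfl, fun k hk ↦ ?_⟩
  rw [← hf ⟨k, hk⟩]
  exact congrArg S'.normal ((Equiv.ofInjective f hinj).extendSubtype_apply_of_mem k hk)

namespace IsAdjacent

theorem dotProduct_eq (h : S.IsAdjacent S' i) (r : Fin n → ℤ) :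
    r ⬝ᵥ v' = r ⬝ᵥ v + S.length i * (r ⬝ᵥ S.dir i) := by
  rw [h.eq_add, dotProduct_add, dotProduct_smul, smul_eq_mul]

theorem normal_dotProduct_dir_self (h : S.IsAdjacent S' i) : S'.normal i ⬝ᵥ S.dir i = -1 := by
  have hdir : S.dir i = (S'.normal i ⬝ᵥ S.dir i) • S'.dir i := S'.isDualPair.ext fun m ↦ by
    rw [dotProduct_smul, S'.isDualPair m i]
    rcases eq_or_ne m i with rfl | hm
    · simp
    · rw [h.normal_eq m hm, S.isDualPair m i, if_neg hm, smul_zero]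
  have hunit : (S'.normal i ⬝ᵥ S.dir i) * (S.normal i ⬝ᵥ S'.dir i) = 1 := by
    rw [← smul_eq_mul, ← dotProduct_smul, ← hdir, S.isDualPair i i, if_pos rfl]
  have hle : S'.normal i ⬝ᵥ S.dir i ≤ 0 := by
    have := S'.normal_dotProduct_le i S.mem
    rw [h.dotProduct_eq] at this
    nlinarith [S.one_le_length i]
  rcases Int.eq_one_or_neg_one_of_mul_eq_one hunit with h1 | h1
  · omega
  · exact h1

theorem dir_self (h : S.IsAdjacent S' i) : S'.dir i = -S.dir i := S'.isDualPair.ext fun m ↦ by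
  rw [dotProduct_neg, S'.isDualPair m i]
  rcases eq_or_ne m i with rfl | hm
  · rw [h.normal_dotProduct_dir_self, if_pos rfl, neg_neg]
  · rw [h.normal_eq m hm, S.isDualPair m i, if_neg hm, neg_zero]

theorem dir_of_ne (h : S.IsAdjacent S' i) {k : Fin n} (hk : k ≠ i) :
    S'.dir k = S.dir k + (S'.normal i ⬝ᵥ S.dir k) • S.dir i := S'.isDualPair.ext fun m ↦ by
  rw [dotProduct_add, dotProduct_smul, S'.isDualPair m k, smul_eq_mul]
  rcases eq_or_ne m i with rfl | hm
  · rw [h.normal_dotProduct_dir_self, if_neg hk.symm]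
    ring
  · rw [h.normal_eq m hm, S.isDualPair m k, S.isDualPair m i, if_neg hm, mul_zero, add_zero]

theorem sum_dotProduct_dir (h : S.IsAdjacent S' i) (r : Fin n → ℤ) :
    ∑ k, r ⬝ᵥ S'.dir k =
      ∑ k, r ⬝ᵥ S.dir k + (∑ k, S'.normal i ⬝ᵥ S.dir k - 1) * (r ⬝ᵥ S.dir i) := by
  have hterm (k) (hk : k ∈ Finset.univ.erase i) :
      r ⬝ᵥ S'.dir k = r ⬝ᵥ S.dir k + (S'.normal i ⬝ᵥ S.dir k) * (r ⬝ᵥ S.dir i) := by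
    rw [h.dir_of_ne (Finset.ne_of_mem_erase hk), dotProduct_add, dotProduct_smul, smul_eq_mul]
  have hsplit (g : Fin n → ℤ) : ∑ k, g k = g i + ∑ k ∈ Finset.univ.erase i, g k :=
    (Finset.add_sum_erase _ g (Finset.mem_univ i)).symm
  rw [hsplit (fun k ↦ r ⬝ᵥ S'.dir k), hsplit (fun k ↦ r ⬝ᵥ S.dir k),
    hsplit (fun k ↦ S'.normal i ⬝ᵥ S.dir k), Finset.sum_congr rfl hterm, Finset.sum_add_distrib,
    ← Finset.sum_mul, h.dir_self, dotProduct_neg, h.normal_dotProduct_dir_self]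
  ring

theorem normal_eq_of_dotProduct_neg (h : S.IsAdjacent S' i) (hr : IsFacetForm P r b)
    (h0 : r ⬝ᵥ v' + b = 0) (hi : r ⬝ᵥ S.dir i < 0) : S'.normal i = r := by
  obtain ⟨m, rfl⟩ := S'.exists_normal_eq hr h0
  rcases eq_or_ne m i with rfl | hm
  · rfl
  · rw [h.normal_eq m hm, S.isDualPair m i, if_neg hm] at hi
    exact absurd hi (lt_irrefl 0)

end IsAdjacent

end SmoothVertex

end Adjacent

/-! ### Faces of smooth polytopes -/

section FaceSmooth

variable {n : ℕ} {P : Set (Fin n → ℝ)} {v : Fin n → ℤ} {S : SmoothVertex P v}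
  {f : Module.Dual ℝ (Fin n → ℝ)}

theorem isPrimitive_of_dotProduct_eq_one {a w : Fin n → ℤ} (h : a ⬝ᵥ w = 1) : IsPrimitive w :=
  ⟨by rintro rfl; simp at h, fun d hd ↦ isUnit_of_dvd_one <|
    h ▸ Finset.dvd_sum fun j _ ↦ (hd j).mul_left (a j)⟩

namespace SmoothVertex

theorem vectorSpan_face (hf : ∀ x ∈ P, f (castVec v) ≤ f x) :
    vectorSpan ℝ {x ∈ P | f x = f (castVec v)} = Submodule.span ℝ
      (Set.range fun i : {i // f (castVec (S.dir i)) = 0} ↦ castVec (S.dir i)) := by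
  have hv : castVec v ∈ {x ∈ P | f x = f (castVec v)} := ⟨S.mem, rfl⟩
  refine le_antisymm ?_ (Submodule.span_le.2 ?_)
  · rw [vectorSpan_eq_span_vsub_set_right ℝ hv, Submodule.span_le]
    rintro _ ⟨x, ⟨hx, hfx⟩, rfl⟩
    change x - castVec v ∈ _
    rw [← S.isDualPair.map_castVec.sum_smul (x - castVec v)]
    refine Submodule.sum_mem _ fun i _ ↦ ?_
    by_cases hi : f (castVec (S.dir i)) = 0
    · exact Submodule.smul_mem _ _ (Submodule.subset_span ⟨⟨i, hi⟩, rfl⟩)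
    · have : S.coord i x = 0 := (apply_eq_iff hf hx).1 hfx i hi
      rw [← intForm_apply, ← coord, this, zero_smul]
      exact Submodule.zero_mem _
  · rintro _ ⟨⟨i, hi⟩, rfl⟩
    have hmem : castVec (v + S.dir i) ∈ {x ∈ P | f x = f (castVec v)} :=
      ⟨S.add_dir_mem i, by rw [map_add, map_add, hi, add_zero]⟩
    simpa using vsub_mem_vectorSpan ℝ hmem hv

theorem fdim_face (hf : ∀ x ∈ P, f (castVec v) ≤ f x) :
    fdim {x ∈ P | f x = f (castVec v)} = Nat.card {i // f (castVec (S.dir i)) = 0} := by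
  classical
  have hli : LinearIndependent ℝ fun i : {i // f (castVec (S.dir i)) = 0} ↦ castVec (S.dir i) :=
    S.isDualPair.map_castVec.linearIndependent.comp _ Subtype.val_injective
  rw [fdim, S.vectorSpan_face hf, finrank_span_eq_card hli, Nat.card_eq_fintype_card]

open Classical in
theorem castVec_eq_sum_of_mem_vectorSpan_face (hf : ∀ x ∈ P, f (castVec v) ≤ f x) {z : Fin n → ℤ}
    (hz : castVec z ∈ vectorSpan ℝ {x ∈ P | f x = f (castVec v)}) :
    castVec z = ∑ i : {i // f (castVec (S.dir i)) = 0},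
      ((S.normal i ⬝ᵥ z : ℤ) : ℝ) • castVec (S.dir i) := by
  conv_lhs => rw [← S.isDualPair.sum_smul z]
  simp only [map_sum, castVec_zsmul]
  rw [← Fintype.sum_subtype_add_sum_subtype fun i ↦ f (castVec (S.dir i)) = 0, add_eq_left]
  refine Finset.sum_eq_zero fun ⟨i, hi⟩ _ ↦ ?_
  have hle : vectorSpan ℝ {x ∈ P | f x = f (castVec v)} ≤ LinearMap.ker (intForm (S.normal i)) := by
    rw [S.vectorSpan_face hf, Submodule.span_le]
    rintro _ ⟨⟨k, hk⟩, rfl⟩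
    have hik : i ≠ k := fun h ↦ hi (h ▸ hk)
    simp [intForm_castVec, S.isDualPair i k, hik]
  have := hle hz
  rw [LinearMap.mem_ker, intForm_castVec] at this
  rw [this, zero_smul]

theorem isEdge_face_iff (hP : IsLatticePolytope P) (hf : ∀ x ∈ P, f (castVec v) ≤ f x)
    (F : Set (Fin n → ℝ)) :
    (IsFace {x ∈ P | f x = f (castVec v)} F ∧ castVec v ∈ F ∧ fdim F = 1) ↔
      ∃ i : {i // f (castVec (S.dir i)) = 0},
        F = segment ℝ (castVec v) (castVec (v + S.length i • S.dir i)) := by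
  have hend (i) : f (castVec (v + S.length i • S.dir i)) =
      f (castVec v) + S.length i * f (castVec (S.dir i)) := by
    rw [map_add, map_add, castVec_zsmul, map_smul, smul_eq_mul]
  constructor
  · rintro ⟨hF, hvF, hdim⟩
    obtain ⟨i, rfl⟩ :=
      (S.isEdge_iff F).1 ⟨(isFace_setOf_minimal f S.mem hf).trans hP hF, hvF, hdim⟩
    have hi := (hF.subset (right_mem_segment ℝ _ _)).2
    rw [hend, add_eq_left, mul_eq_zero, Int.cast_eq_zero] at hi
    exact ⟨⟨i, hi.resolve_left (by linarith [S.one_le_length i])⟩, rfl⟩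
  · rintro ⟨⟨i, hi⟩, rfl⟩
    obtain ⟨hF, hvF, hdim⟩ := (S.isEdge_iff _).2 ⟨i, rfl⟩
    refine ⟨hF.of_subset (fun x hx ↦ ⟨hF.subset hx, ?_⟩) (Set.sep_subset _ _), hvF, hdim⟩
    obtain ⟨a, b, -, -, hab, rfl⟩ := hx
    rw [map_add, map_smul, map_smul, hend, hi, mul_zero, add_zero, ← add_smul, hab, one_smul]

end SmoothVertex

theorem IsFace.isSmoothPoly {R : Set (Fin n → ℝ)} (hP : IsSmoothLatticePolytope P)
    (hR : IsFace P R) : IsSmoothPoly R := by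
  classical
  intro x hx
  rw [hR.extremePoints_eq] at hx
  obtain ⟨-, f, c, hf, rfl⟩ := hR
  obtain ⟨⟨-, hxc⟩, hxP⟩ := hx
  obtain ⟨v, rfl⟩ := hP.isLatticePolytope.exists_castVec hxP
  obtain rfl : f (castVec v) = c := hxc
  obtain ⟨S⟩ := hP.nonempty_smoothVertex hxP
  let e : Fin (fdim {x ∈ P | f x = f (castVec v)}) ≃ {i // f (castVec (S.dir i)) = 0} :=
    (finCongr (S.fdim_face hf)).trans (Finite.equivFin _).symm
  have hli : LinearIndependent ℝ fun i ↦ castVec (S.dir (e i)) :=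
    S.isDualPair.map_castVec.linearIndependent.comp _ (Subtype.val_injective.comp e.injective)
  refine ⟨fun i ↦ S.dir (e i), fun i ↦ S.length (e i), fun i ↦ ?_, fun i ↦ ?_, hli, fun i ↦ ?_,
    fun z hz ↦ ⟨fun i ↦ S.normal (e i) ⬝ᵥ z, ?_⟩, fun F ↦ ?_⟩
  · exact Int.cast_pos.2 (S.one_le_length (e i))
  · exact isPrimitive_of_dotProduct_eq_one ((S.isDualPair (e i) (e i)).trans (if_pos rfl))
  · rw [S.vectorSpan_face hf]
    exact Submodule.subset_span ⟨e i, rfl⟩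
  · exact (S.castVec_eq_sum_of_mem_vectorSpan_face hf hz).trans
      (e.sum_comp fun i ↦ ((S.normal i ⬝ᵥ z : ℤ) : ℝ) • castVec (S.dir i)).symm
  · refine (S.isEdge_face_iff hP.isLatticePolytope hf F).trans
      (e.surjective.exists.trans (exists_congr fun i ↦ ?_))
    rw [map_add, castVec_zsmul]
    rfl

end FaceSmooth

/-! ### Interior lattice points -/

section Interior

variable {n : ℕ} {P : Set (Fin n → ℝ)} {r z : Fin n → ℤ} {b : ℤ} {s : ℕ}

theorem IsFacetForm.pos_of_mem_interior_smul (hr : IsFacetForm P r b)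
    (hz : castVec z ∈ interior ((s : ℝ) • P)) : 0 < r ⬝ᵥ z + s * b := by
  have hsurj : Function.Surjective (intForm r) := LinearMap.surjective (by
    rintro h
    obtain ⟨y, hy⟩ := hr.exists_dotProduct_eq_one
    have := LinearMap.congr_fun h (castVec y)
    rw [intForm_castVec, hy] at this
    simp at this)
  have himage : intForm r '' ((s : ℝ) • P) ⊆ Set.Ici (-(s * b : ℝ)) := by
    rintro _ ⟨_, ⟨x, hx, rfl⟩, rfl⟩
    have := mul_nonneg s.cast_nonneg (hr.nonneg x hx)
    simp only [map_smul, smul_eq_mul, Set.mem_Ici]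
    linarith
  have hmem := interior_mono himage
    ((intForm r).isOpenMap_of_finiteDimensional hsurj |>.image_interior_subset _ ⟨_, hz, rfl⟩)
  rw [interior_Ici, Set.mem_Ioi, intForm_castVec] at hmem
  have : (0 : ℝ) < ((r ⬝ᵥ z + s * b : ℤ) : ℝ) := by push_cast; linarith
  exact_mod_cast this

theorem IsSmoothLatticePolytope.nonempty_interior (hP : IsSmoothLatticePolytope P) :
    (interior P).Nonempty :=
  hP.isLatticePolytope.convex.interior_nonempty_iff_affineSpan_eq_top.2 hP.affineSpan_eq_top

theorem SmoothVertex.eq_zero_of_apply_nonpos {v : Fin n → ℤ} (S : SmoothVertex P v)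
    {u : Module.Dual ℝ (Fin n → ℝ)} (hu : ∀ x ∈ P, u (castVec v) ≤ u x)
    (hz : ∀ i, 0 < S.normal i ⬝ᵥ z) (huz : u (castVec z) ≤ 0) : u = 0 := by
  have hexpand := S.isDualPair.apply_eq_sum u
  have hterm (i) (_ : i ∈ Finset.univ) :
      0 ≤ intForm (S.normal i) (castVec z) * u (castVec (S.dir i)) := by
    rw [intForm_castVec]
    exact mul_nonneg (Int.cast_nonneg (hz i).le) (apply_dir_nonneg hu i)
  rw [hexpand] at huz
  have hzero := (Finset.sum_eq_zero_iff_of_nonneg hterm).1 (huz.antisymm (Finset.sum_nonneg hterm))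
  refine LinearMap.ext fun y ↦ (hexpand y).trans <| Finset.sum_eq_zero fun i hi ↦ ?_
  have := hzero i hi
  rw [intForm_castVec, mul_eq_zero, Int.cast_eq_zero] at this
  rw [this.resolve_left (hz i).ne', mul_zero]

theorem IsSmoothLatticePolytope.castVec_mem_interior_smul_iff (hP : IsSmoothLatticePolytope P)
    (hs : 0 < s) : castVec z ∈ interior ((s : ℝ) • P) ↔
      ∀ r b, IsFacetForm P r b → 0 < r ⬝ᵥ z + s * b := by
  refine ⟨fun hz r b hr ↦ hr.pos_of_mem_interior_smul hz, fun hpos ↦ ?_⟩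
  by_contra hz
  have hs' : (s : ℝ) ≠ 0 := Nat.cast_ne_zero.2 hs.ne'
  have hnonempty : (interior ((s : ℝ) • P)).Nonempty := by
    rw [interior_smul₀ hs']
    exact hP.nonempty_interior.smul_set
  obtain ⟨f, hf, hle⟩ := geometric_hahn_banach_of_nonempty_interior_point
    (hP.isLatticePolytope.convex.smul (s : ℝ)) hz hnonempty
  set u : Module.Dual ℝ (Fin n → ℝ) := -f with hu
  obtain ⟨x, hx, hmin⟩ := exists_extremePoint_forall_le hP.isLatticePolytope.isCompact
    (hP.nonempty_interior.mono interior_subset) u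
  obtain ⟨v, rfl⟩ := hP.isLatticePolytope.exists_castVec hx
  obtain ⟨S⟩ := hP.nonempty_smoothVertex hx
  have hcoord (i) : 0 < S.normal i ⬝ᵥ (z - (s : ℤ) • v) := by
    have := hpos _ _ (S.isFacetForm_normal i)
    rw [dotProduct_sub, dotProduct_smul, smul_eq_mul]
    linarith
  have hzero := S.eq_zero_of_apply_nonpos hmin hcoord (by
    rw [map_sub, castVec_zsmul, map_sub, Int.cast_natCast]
    simpa [hu] using hle _ (Set.smul_mem_smul_set hx.1))
  exact hf (ContinuousLinearMap.ext fun y ↦ by simpa [hu] using LinearMap.congr_fun hzero y)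

theorem IsSmoothLatticePolytope.exists_isFacetForm_nonpos (hP : IsSmoothLatticePolytope P)
    (hs : 0 < s) (h : ¬HasInteriorLatticePt P s) (z : Fin n → ℤ) :
    ∃ r b, IsFacetForm P r b ∧ r ⬝ᵥ z + s * b ≤ 0 := by
  by_contra! hpos
  exact h ⟨_, (hP.castVec_mem_interior_smul_iff hs).2 hpos, isLatticePt_castVec z⟩

end Interior

/-! ### Blocking facets -/

/-- The facet `r x + b = 0` keeps the lattice point `s • v + ∑ k, S.dir k` of `s • P` out of the
interior of `s • P`. -/
structure SmoothVertex.Blocks {n : ℕ} {P : Set (Fin n → ℝ)} {v : Fin n → ℤ}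
    (S : SmoothVertex P v) (s : ℤ) (r : Fin n → ℤ) (b : ℤ) : Prop where
  isFacetForm : IsFacetForm P r b
  nonpos : s * (r ⬝ᵥ v + b) + ∑ k, r ⬝ᵥ S.dir k ≤ 0

section Blocks

variable {n : ℕ} {P : Set (Fin n → ℝ)} {v v' r : Fin n → ℤ} {s b : ℤ}
  {S : SmoothVertex P v} {S' : SmoothVertex P v'} {i : Fin n}

theorem SmoothVertex.Blocks.one_le_height (h : S.Blocks s r b) : 1 ≤ r ⬝ᵥ v + b := by
  have hnonneg := h.isFacetForm.dotProduct_add_nonneg S.mem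
  by_contra! hlt
  have h0 : r ⬝ᵥ v + b = 0 := by omega
  obtain ⟨i, rfl⟩ := S.exists_normal_eq h.isFacetForm h0
  have := h.nonpos
  simp [h0, S.isDualPair i] at this

theorem SmoothVertex.IsAdjacent.blocks_or_blocks (hadj : S.IsAdjacent S' i)
    (h : S.Blocks s r b) (hi : r ⬝ᵥ S.dir i < 0) :
    S'.Blocks s r b ∨ S.Blocks s (S'.normal i) (-(S'.normal i ⬝ᵥ v')) := by
  set K := ∑ k, S'.normal i ⬝ᵥ S.dir k with hK
  rcases lt_or_ge 0 (s * S.length i + K) with hpos | hneg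
  · refine .inl ⟨h.isFacetForm, ?_⟩
    calc s * (r ⬝ᵥ v' + b) + ∑ k, r ⬝ᵥ S'.dir k
        = s * (r ⬝ᵥ v + b) + ∑ k, r ⬝ᵥ S.dir k + (s * S.length i + K - 1) * (r ⬝ᵥ S.dir i) := by
          rw [hadj.dotProduct_eq, hadj.sum_dotProduct_dir]
          ring
      _ ≤ 0 := add_nonpos h.nonpos (mul_nonpos_of_nonneg_of_nonpos (by omega) hi.le)
  · refine .inr ⟨S'.isFacetForm_normal i, ?_⟩
    rw [hadj.dotProduct_eq, hadj.normal_dotProduct_dir_self, ← hK]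
    linarith

theorem IsSmoothLatticePolytope.exists_blocks_minimal (hP : IsSmoothLatticePolytope P) {s : ℕ}
    (hs : 0 < s) (hno : ¬HasInteriorLatticePt P s) :
    ∃ (v : Fin n → ℤ) (S : SmoothVertex P v) (r : Fin n → ℤ) (b : ℤ), S.Blocks s r b ∧
      ∀ (v' : Fin n → ℤ) (S' : SmoothVertex P v') r' b', S'.Blocks s r' b' →
        r ⬝ᵥ v + b ≤ r' ⬝ᵥ v' + b' := by
  obtain ⟨x, hx, -⟩ := exists_extremePoint_forall_le hP.isLatticePolytope.isCompact
    (hP.nonempty_interior.mono interior_subset) 0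
  obtain ⟨v₀, rfl⟩ := hP.isLatticePolytope.exists_castVec hx
  obtain ⟨S₀⟩ := hP.nonempty_smoothVertex hx
  obtain ⟨r₀, b₀, hr₀, hle⟩ := hP.exists_isFacetForm_nonpos hs hno ((s : ℤ) • v₀ + ∑ k, S₀.dir k)
  rw [dotProduct_add, dotProduct_smul, dotProduct_sum, smul_eq_mul] at hle
  obtain ⟨_, ⟨v, S, r, b, hB, rfl⟩, hmin⟩ := Int.exists_least_of_bdd
    (P := fun q ↦ ∃ (v : Fin n → ℤ) (S : SmoothVertex P v) (r : Fin n → ℤ) (b : ℤ),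
      S.Blocks s r b ∧ r ⬝ᵥ v + b = q)
    ⟨1, fun _ ⟨_, _, _, _, hB, hq⟩ ↦ hq ▸ hB.one_le_height⟩
    ⟨_, v₀, S₀, r₀, b₀, ⟨hr₀, by linarith⟩, rfl⟩
  exact ⟨v, S, r, b, hB, fun v' S' r' b' hB' ↦ hmin _ ⟨v', S', r', b', hB', rfl⟩⟩

theorem SmoothVertex.Blocks.eq_neg_one_of_minimal (hP : IsSmoothLatticePolytope P)
    (h : S.Blocks s r b)
    (hmin : ∀ (v' : Fin n → ℤ) (S' : SmoothVertex P v') r' b', S'.Blocks s r' b' →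
      r ⬝ᵥ v + b ≤ r' ⬝ᵥ v' + b') (hi : r ⬝ᵥ S.dir i < 0) : r ⬝ᵥ S.dir i = -1 := by
  obtain ⟨S', hadj⟩ := S.exists_isAdjacent hP i
  have hlen := S.one_le_length i
  have hnonneg := h.isFacetForm.dotProduct_add_nonneg S'.mem
  rw [hadj.dotProduct_eq] at hnonneg
  rcases hadj.blocks_or_blocks h hi with hB | hB
  · have := hmin _ _ _ _ hB
    rw [hadj.dotProduct_eq] at this
    nlinarith
  · have hle := hmin _ _ _ _ hB
    rw [hadj.dotProduct_eq, hadj.normal_dotProduct_dir_self] at hle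
    nlinarith

theorem IsSmoothLatticePolytope.exists_blocks_height_one (hP : IsSmoothLatticePolytope P) {s : ℕ}
    (hs : n < 2 * s) (hno : ¬HasInteriorLatticePt P s) :
    ∃ (v : Fin n → ℤ) (S : SmoothVertex P v) (r : Fin n → ℤ) (b : ℤ), S.Blocks s r b ∧
      r ⬝ᵥ v + b = 1 := by
  obtain ⟨v, S, r, b, hB, hmin⟩ := hP.exists_blocks_minimal (by omega) hno
  have hsum : -(n : ℤ) ≤ ∑ k, r ⬝ᵥ S.dir k := by
    have : ∑ k : Fin n, (-1 : ℤ) ≤ ∑ k, r ⬝ᵥ S.dir k := Finset.sum_le_sum fun k _ ↦ by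
      by_contra! hlt
      have := hB.eq_neg_one_of_minimal hP hmin (i := k) (by omega)
      omega
    simpa using this
  exact ⟨v, S, r, b, hB, by nlinarith [hB.one_le_height, hB.nonpos]⟩

end Blocks

section Core

theorem card_mul_add_mul_sum_nonneg {ι : Type*} {N M : Finset ι} {A : ℤ} {m c z : ι → ℤ}
    (hz : ∀ k ∈ M, 0 ≤ z k) (hm : ∀ i ∈ N, 0 ≤ A + m i)
    (hc : ∀ i ∈ N, ∀ k ∈ M, 0 ≤ A + m i + m k + c k * m i) :
    0 ≤ N.card * (A + ∑ k ∈ M, z k * (A + m k)) +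
      (1 + ∑ k ∈ M, z k + ∑ k ∈ M, z k * c k) * ∑ i ∈ N, m i := by
  have hterm (i) (hi : i ∈ N) :
      0 ≤ (A + ∑ k ∈ M, z k * (A + m k)) + (1 + ∑ k ∈ M, z k + ∑ k ∈ M, z k * c k) * m i :=
    calc 0 ≤ A + m i + ∑ k ∈ M, z k * (A + m i + m k + c k * m i) :=
          add_nonneg (hm i hi) <| Finset.sum_nonneg fun k hk ↦ mul_nonneg (hz k hk) (hc i hi k hk)
      _ = _ := by
          simp only [mul_add, add_mul, Finset.sum_add_distrib, Finset.sum_mul, mul_assoc]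
          ring
  have := Finset.sum_nonneg hterm
  rwa [Finset.sum_add_distrib, ← Finset.mul_sum, Finset.sum_const, nsmul_eq_mul] at this

theorem eq_zero_of_sum_nonpos {ι : Type*} [Fintype ι] [DecidableEq ι] {N : Finset ι} {A : ℤ}
    {m c z : ι → ℤ} (hz : ∀ k ∈ Nᶜ, 1 ≤ z k)
    (hN : N.card < 1 + ∑ k ∈ Nᶜ, z k + ∑ k ∈ Nᶜ, z k * c k) (hA : 0 ≤ A)
    (hm : ∀ k, 0 ≤ A + m k) (hc : ∀ i ∈ N, ∀ k ∈ Nᶜ, 0 ≤ A + m i + m k + c k * m i)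
    (h : (1 + ∑ k ∈ Nᶜ, z k) * A + ∑ k ∈ N, m k + ∑ k ∈ Nᶜ, z k * m k ≤ 0) : m = 0 := by
  have hz0 (k) (hk : k ∈ Nᶜ) : 0 ≤ z k := zero_le_one.trans (hz k hk)
  have hXN := card_mul_add_mul_sum_nonneg hz0 (fun i _ ↦ hm i) hc
  set D := 1 + ∑ k ∈ Nᶜ, z k + ∑ k ∈ Nᶜ, z k * c k
  set X := A + ∑ k ∈ Nᶜ, z k * (A + m k) with hX
  have hXsum : X = (1 + ∑ k ∈ Nᶜ, z k) * A + ∑ k ∈ Nᶜ, z k * m k := by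
    simp only [hX, mul_add, Finset.sum_add_distrib, ← Finset.sum_mul]
    ring
  have hterm (k) (hk : k ∈ Nᶜ) : 0 ≤ z k * (A + m k) := mul_nonneg (hz0 k hk) (hm k)
  have hsum : 0 ≤ ∑ k ∈ Nᶜ, z k * (A + m k) := Finset.sum_nonneg hterm
  have hX0 : X = 0 := by nlinarith
  have hA0 : A = 0 := by linarith
  have hsum0 : ∑ k ∈ Nᶜ, z k * (A + m k) = 0 := by linarith
  have hmem (k) (_ : k ∈ N) : 0 ≤ m k := by simpa [hA0] using hm k
  have hmem0 : ∑ k ∈ N, m k = 0 := (Finset.sum_nonneg hmem).antisymm' (by linarith)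
  funext k
  by_cases hk : k ∈ N
  · exact (Finset.sum_eq_zero_iff_of_nonneg hmem).1 hmem0 k hk
  · have hk' := Finset.mem_compl.2 hk
    have := (Finset.sum_eq_zero_iff_of_nonneg hterm).1 hsum0 k hk'
    rw [hA0, zero_add] at this
    exact (mul_eq_zero.1 this).resolve_left (by linarith [hz k hk'])

theorem exists_weights {ι : Type*} [Fintype ι] [DecidableEq ι] {N : Finset ι} {c : ι → ℤ} {s : ℤ}
    {j : ι} (hs : Fintype.card ι < 2 * s) (hc : ∀ k ∈ Nᶜ, 0 ≤ c k) (hj : j ∈ Nᶜ) (hcj : 1 ≤ c j)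
    (hN : s + ∑ k ∈ Nᶜ, c k ≤ N.card) :
    ∃ z : ι → ℤ, (∀ k ∈ Nᶜ, 1 ≤ z k) ∧ 1 + ∑ k ∈ Nᶜ, z k = s ∧
      N.card < s + ∑ k ∈ Nᶜ, z k * c k := by
  have hcard : (N.card : ℤ) + (Nᶜ).card = Fintype.card ι := mod_cast N.card_add_card_compl
  have hsum : c j ≤ ∑ k ∈ Nᶜ, c k := Finset.single_le_sum hc hj
  set t : ℤ := s - 1 - (Nᶜ).card with ht
  have ht1 : 1 ≤ t := by omega
  have hweighted (g : ι → ℤ) :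
      ∑ k ∈ Nᶜ, (1 + Pi.single j t : ι → ℤ) k * g k = ∑ k ∈ Nᶜ, g k + t * g j := by
    simp only [Pi.add_apply, Pi.one_apply, add_mul, one_mul, Finset.sum_add_distrib,
      Pi.single_apply, ite_mul, zero_mul, Finset.sum_ite_eq', if_pos hj]
  refine ⟨1 + Pi.single j t, fun k _ ↦ ?_, ?_, ?_⟩
  · rw [Pi.add_apply, Pi.one_apply, Pi.single_apply]
    split_ifs <;> omega
  · have := hweighted 1
    simp only [Pi.one_apply, mul_one, Finset.sum_const, nsmul_eq_mul] at this
    rw [this, ht]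
    ring
  · rw [hweighted]
    have : t ≤ t * c j := le_mul_of_one_le_right (by omega) hcj
    omega

variable {n : ℕ} {P : Set (Fin n → ℝ)} {v r r' : Fin n → ℤ} {b b' : ℤ} {s : ℕ}
  {S : SmoothVertex P v} {i : Fin n}

namespace SmoothVertex

theorem dotProduct_dir_eq_neg_one (hr : IsFacetForm P r b) (h1 : r ⬝ᵥ v + b = 1)
    (hi : r ⬝ᵥ S.dir i < 0) : r ⬝ᵥ S.dir i = -1 ∧ S.length i = 1 := by
  have hnonneg := hr.dotProduct_add_nonneg (extremePoints_subset (S.add_length_smul_dir_mem i))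
  rw [dotProduct_add, dotProduct_smul, smul_eq_mul] at hnonneg
  have := S.one_le_length i
  exact ⟨by nlinarith, by nlinarith⟩

theorem exists_isAdjacent_normal_eq (hP : IsSmoothLatticePolytope P) (S : SmoothVertex P v)
    (hr : IsFacetForm P r b) (h1 : r ⬝ᵥ v + b = 1) (hi : r ⬝ᵥ S.dir i < 0) :
    ∃ S' : SmoothVertex P (v + S.dir i), S.IsAdjacent S' i ∧ S'.normal i = r := by
  obtain ⟨hri, hlen⟩ := dotProduct_dir_eq_neg_one hr h1 hi
  have hv : v + S.dir i = v + S.length i • S.dir i := by rw [hlen, one_smul]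
  rw [hv]
  obtain ⟨S', hadj⟩ := S.exists_isAdjacent hP i
  refine ⟨S', hadj, hadj.normal_eq_of_dotProduct_neg hr ?_ hi⟩
  rw [← hv, dotProduct_add]
  linarith

/-- The left-hand side is the value of `r' x + b'` at the neighbour along the `k`-th edge of the
vertex `v + S.dir i`. -/
theorem dotProduct_add_dir_add_dir_nonneg (hP : IsSmoothLatticePolytope P) (S : SmoothVertex P v)
    (hr : IsFacetForm P r b) (h1 : r ⬝ᵥ v + b = 1) (hi : r ⬝ᵥ S.dir i < 0)
    (hr' : IsFacetForm P r' b') {k : Fin n} (hk : k ≠ i) :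
    0 ≤ r' ⬝ᵥ v + b' + r' ⬝ᵥ S.dir i + r' ⬝ᵥ S.dir k + r ⬝ᵥ S.dir k * r' ⬝ᵥ S.dir i := by
  obtain ⟨S', hadj, rfl⟩ := S.exists_isAdjacent_normal_eq hP hr h1 hi
  have := hr'.dotProduct_add_nonneg (S'.add_dir_mem k)
  simp only [hadj.dir_of_ne hk, dotProduct_add, dotProduct_smul, smul_eq_mul] at this
  linarith

theorem Blocks.add_sum_compl_le (h : S.Blocks s r b) (h1 : r ⬝ᵥ v + b = 1) :
    s + ∑ k ∈ ({i | r ⬝ᵥ S.dir i < 0} : Finset (Fin n))ᶜ, r ⬝ᵥ S.dir k ≤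
      ({i | r ⬝ᵥ S.dir i < 0} : Finset (Fin n)).card := by
  have hsum : ∑ k with r ⬝ᵥ S.dir k < 0, r ⬝ᵥ S.dir k =
      -({i | r ⬝ᵥ S.dir i < 0} : Finset (Fin n)).card := by
    rw [Finset.sum_congr rfl fun k hk ↦
      (dotProduct_dir_eq_neg_one h.isFacetForm h1 (Finset.mem_filter.1 hk).2).1]
    simp
  have := h.nonpos
  rw [h1, ← Finset.sum_add_sum_compl {i | r ⬝ᵥ S.dir i < 0}, hsum] at this
  linarith

theorem Blocks.dotProduct_dir_nonpos (hP : IsSmoothLatticePolytope P) (hs : n < 2 * s)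
    (hno : ¬HasInteriorLatticePt P s) (h : S.Blocks s r b) (h1 : r ⬝ᵥ v + b = 1) (j : Fin n) :
    r ⬝ᵥ S.dir j ≤ 0 := by
  by_contra! hj
  have hle := h.add_sum_compl_le h1
  set N : Finset (Fin n) := {i | r ⬝ᵥ S.dir i < 0}
  have hmemN (i) : i ∈ N ↔ r ⬝ᵥ S.dir i < 0 := by simp [N]
  have hcompl (k) (hk : k ∈ Nᶜ) : 0 ≤ r ⬝ᵥ S.dir k := by
    rwa [Finset.mem_compl, hmemN, not_lt] at hk
  obtain ⟨z, hz, hzs, hzN⟩ := exists_weights (by rw [Fintype.card_fin]; exact_mod_cast hs) hcompl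
    (by rw [Finset.mem_compl, hmemN]; omega) hj hle
  obtain ⟨r', b', hr', hr'le⟩ := hP.exists_isFacetForm_nonpos (by omega) hno
    ((s : ℤ) • v + ∑ k ∈ N, S.dir k + ∑ k ∈ Nᶜ, z k • S.dir k)
  simp only [dotProduct_add, dotProduct_smul, dotProduct_sum, smul_eq_mul] at hr'le
  have hzero : (fun k ↦ r' ⬝ᵥ S.dir k) = 0 := by
    refine eq_zero_of_sum_nonpos hz (by rwa [hzs]) (hr'.dotProduct_add_nonneg S.mem) (fun k ↦ ?_)
      (fun i hi k hk ↦ S.dotProduct_add_dir_add_dir_nonneg hP h.isFacetForm h1 ((hmemN i).1 hi) hr'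
        fun hki ↦ Finset.mem_compl.1 hk (hki ▸ hi)) (by rw [hzs]; linarith)
    have := hr'.dotProduct_add_nonneg (S.add_dir_mem k)
    rw [dotProduct_add] at this
    linarith
  obtain ⟨y, hy⟩ := hr'.exists_dotProduct_eq_one
  have hzero' (k) : r' ⬝ᵥ S.dir k = 0 := congrFun hzero k
  rw [← S.isDualPair.sum_smul y, dotProduct_sum] at hy
  simp only [dotProduct_smul, hzero', smul_zero, Finset.sum_const_zero, zero_ne_one] at hy

end SmoothVertex

theorem IsSmoothLatticePolytope.exists_isFacetForm_neg_sum (hP : IsSmoothLatticePolytope P)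
    (hs : n < 2 * s) (hno : ¬HasInteriorLatticePt P s) :
    ∃ (v : Fin n → ℤ) (S : SmoothVertex P v) (N : Finset (Fin n)) (b : ℤ), s ≤ N.card ∧
      IsFacetForm P (-∑ i ∈ N, S.normal i) b ∧ (-∑ i ∈ N, S.normal i) ⬝ᵥ v + b = 1 := by
  obtain ⟨v, S, r, b, hB, h1⟩ := hP.exists_blocks_height_one hs hno
  have hnonpos := hB.dotProduct_dir_nonpos hP hs hno h1
  have hle := hB.add_sum_compl_le h1
  set N : Finset (Fin n) := {i | r ⬝ᵥ S.dir i < 0}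
  have hmemN (i) : i ∈ N ↔ r ⬝ᵥ S.dir i < 0 := by simp [N]
  have hcompl (k) (hk : k ∉ N) : r ⬝ᵥ S.dir k = 0 :=
    (hnonpos k).antisymm (by rwa [hmemN, not_lt] at hk)
  have hr : r = -∑ i ∈ N, S.normal i := S.isDualPair.symm.ext fun k ↦ by
    simp only [dotProduct_neg, dotProduct_sum, dotProduct_comm _ r, S.isDualPair.symm k,
      Finset.sum_ite_eq]
    split_ifs with hk
    · exact (SmoothVertex.dotProduct_dir_eq_neg_one hB.isFacetForm h1 ((hmemN k).1 hk)).1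
    · rw [hcompl k hk, neg_zero]
  rw [Finset.sum_eq_zero fun k hk ↦ hcompl k (Finset.mem_compl.1 hk), add_zero] at hle
  exact ⟨v, S, N, b, mod_cast hle, hr ▸ hB.isFacetForm, hr ▸ h1⟩

end Core

/-! ### Normal equivalence -/

section NormEquiv

variable {n : ℕ} {R R' : Set (Fin n → ℝ)}

theorem setOf_forall_le_subset (hR : IsCompact R) {u u' : Module.Dual ℝ (Fin n → ℝ)}
    (h : ∀ x ∈ R.extremePoints ℝ, (∀ y ∈ R, u x ≤ u y) → ∀ y ∈ R, u' x ≤ u' y) :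
    {x ∈ R | ∀ y ∈ R, u x ≤ u y} ⊆ {x ∈ R | ∀ y ∈ R, u' x ≤ u' y} := by
  rintro x ⟨hxR, hx⟩
  have hF := isFace_setOf_minimal u hxR hx
  obtain ⟨z, hz, hzmax⟩ := exists_extremePoint_forall_le (hF.isExposed.isCompact hR) hF.1 (-u')
  rw [hF.extremePoints_eq] at hz
  refine ⟨hxR, fun y hy ↦ ?_⟩
  calc u' x ≤ u' z := neg_le_neg_iff.1 (hzmax x ⟨hxR, rfl⟩)
    _ ≤ u' y := h z hz.2 (fun y hy ↦ hz.1.2.trans_le (hx y hy)) y hy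

theorem setOf_forall_le_eq (hR : IsCompact R)
    (h : ∀ x ∈ R.extremePoints ℝ, ∃ x' ∈ R', ∀ u : Module.Dual ℝ (Fin n → ℝ),
      (∀ y ∈ R, u x ≤ u y) ↔ ∀ y ∈ R', u x' ≤ u y) {u u' : Module.Dual ℝ (Fin n → ℝ)}
    (heq : {x ∈ R' | ∀ y ∈ R', u x ≤ u y} = {x ∈ R' | ∀ y ∈ R', u' x ≤ u' y}) :
    {x ∈ R | ∀ y ∈ R, u x ≤ u y} = {x ∈ R | ∀ y ∈ R, u' x ≤ u' y} := by
  refine (setOf_forall_le_subset hR fun x hx hxu ↦ ?_).antisymm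
    (setOf_forall_le_subset hR fun x hx hxu ↦ ?_) <;> obtain ⟨x', hx', hiff⟩ := h x hx
  · exact (hiff u').2 (heq.subset ⟨hx', (hiff u).1 hxu⟩).2
  · exact (hiff u).2 (heq.superset ⟨hx', (hiff u').1 hxu⟩).2

theorem normEquiv_of_forall_exists (hR : IsCompact R) (hR' : IsCompact R')
    (h : ∀ x ∈ R.extremePoints ℝ, ∃ x' ∈ R', ∀ u : Module.Dual ℝ (Fin n → ℝ),
      (∀ y ∈ R, u x ≤ u y) ↔ ∀ y ∈ R', u x' ≤ u y)
    (h' : ∀ x' ∈ R'.extremePoints ℝ, ∃ x ∈ R, ∀ u : Module.Dual ℝ (Fin n → ℝ),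
      (∀ y ∈ R', u x' ≤ u y) ↔ ∀ y ∈ R, u x ≤ u y) : NormEquiv R R' :=
  fun _ _ ↦ ⟨setOf_forall_le_eq hR' h', setOf_forall_le_eq hR h⟩

end NormEquiv

section Translation

variable {n : ℕ} {P F : Set (Fin n → ℝ)} {r : Fin n → ℤ} {b : ℤ}

theorem vadd_mem_extremePoints_vadd_iff (d : Fin n → ℝ) {x : Fin n → ℝ} :
    d +ᵥ x ∈ (d +ᵥ P).extremePoints ℝ ↔ x ∈ P.extremePoints ℝ := by
  rw [mem_extremePoints, mem_extremePoints, Set.vadd_mem_vadd_set_iff, ← Set.image_vadd]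
  simp only [Set.forall_mem_image, vadd_eq_add, mem_openSegment_translate, add_right_inj]

theorem IsFace.vadd (hF : IsFace P F) (d : Fin n → ℝ) : IsFace (d +ᵥ P) (d +ᵥ F) := by
  obtain ⟨hne, u, c, hc, rfl⟩ := hF
  refine ⟨hne.vadd_set, u, u d + c, ?_, ?_⟩
  · rintro _ ⟨x, hx, rfl⟩
    simpa using hc x hx
  · ext x
    rw [Set.mem_vadd_set_iff_neg_vadd_mem, Set.mem_sep_iff, Set.mem_sep_iff,
      Set.mem_vadd_set_iff_neg_vadd_mem, vadd_eq_add, map_add, map_neg, neg_add_eq_iff_eq_add]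

theorem isFace_vadd_iff (d : Fin n → ℝ) : IsFace (d +ᵥ P) F ↔ IsFace P (-d +ᵥ F) :=
  ⟨fun h ↦ by simpa using h.vadd (-d), fun h ↦ by simpa using h.vadd d⟩

theorem fdim_vadd (d : Fin n → ℝ) : fdim (d +ᵥ F) = fdim F := by
  rw [fdim, vectorSpan_vadd, fdim]

theorem IsSmoothPoly.vadd (hP : IsSmoothPoly P) (d : Fin n → ℝ) : IsSmoothPoly (d +ᵥ P) := by
  unfold IsSmoothPoly
  rw [fdim_vadd, vectorSpan_vadd]
  intro v' hv'
  obtain ⟨v, rfl⟩ : ∃ v, d +ᵥ v = v' := ⟨-d +ᵥ v', vadd_neg_vadd d v'⟩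
  obtain ⟨w, c, hc, hprim, hli, hmem, hspan, hedge⟩ :=
    hP v ((vadd_mem_extremePoints_vadd_iff d).1 hv')
  refine ⟨w, c, hc, hprim, hli, hmem, hspan, fun F ↦ ?_⟩
  rw [isFace_vadd_iff, ← fdim_vadd (-d), ← Set.mem_neg_vadd_set_iff, hedge]
  refine exists_congr fun i ↦ ?_
  rw [neg_vadd_eq_iff, vadd_segment, vadd_eq_add, vadd_eq_add, add_assoc]

theorem IsLatticePolytope.vadd (hP : IsLatticePolytope P) (d : Fin n → ℤ) :
    IsLatticePolytope (castVec d +ᵥ P) := by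
  obtain ⟨V, hV, rfl⟩ := hP
  refine ⟨castVec d +ᵥ V, fun x hx ↦ ?_, ?_⟩
  · obtain ⟨y, hy, rfl⟩ := Finset.mem_vadd_finset.1 hx
    obtain ⟨z, rfl⟩ := isLatticePt_iff_exists_castVec.1 (hV y hy)
    rw [vadd_eq_add, ← map_add]
    exact isLatticePt_castVec _
  · rw [Finset.coe_vadd_finset, convexHull_vadd]

theorem IsSmoothLatticePolytope.vadd (hP : IsSmoothLatticePolytope P) (d : Fin n → ℤ) :
    IsSmoothLatticePolytope (castVec d +ᵥ P) where
  isLatticePolytope := hP.isLatticePolytope.vadd d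
  affineSpan_eq_top := by
    rw [← AffineSubspace.pointwise_vadd_span, hP.affineSpan_eq_top,
      AffineSubspace.pointwise_vadd_top]
  isSmoothPoly := hP.isSmoothPoly.vadd _

theorem IsFacetForm.vadd (hr : IsFacetForm P r b) (d : Fin n → ℤ) :
    IsFacetForm (castVec d +ᵥ P) r (b - r ⬝ᵥ d) where
  nonneg := by
    rintro _ ⟨x, hx, rfl⟩
    have := hr.nonneg x hx
    simp only [vadd_eq_add, map_add, intForm_castVec]
    push_cast
    linarith
  exists_dotProduct_eq_one := hr.exists_dotProduct_eq_one
  exists_eq_zsmul r' b' h := by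
    obtain ⟨m, rfl, hm⟩ := hr.exists_eq_zsmul r' (b' + r' ⬝ᵥ d) fun x hx hx0 ↦ by
      have := h (castVec d +ᵥ x) (Set.vadd_mem_vadd_set hx)
      simp only [vadd_eq_add, map_add, intForm_castVec] at this
      push_cast at this ⊢
      linarith [this (by linarith)]
    refine ⟨m, rfl, ?_⟩
    rw [smul_dotProduct, smul_eq_mul] at hm
    linarith

end Translation

/-! ### Cayley structures from facets -/

section Adjacent

variable {n : ℕ} {P : Set (Fin n → ℝ)} {v v' : Fin n → ℤ} {S : SmoothVertex P v}
  {S' : SmoothVertex P v'} {i : Fin n}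

namespace SmoothVertex.IsAdjacent

/-- The directions orthogonal to one of the two exchanged facet normals are orthogonal to the other,
and shared by both vertices. -/
theorem forall_dir_nonneg_iff (h : S.IsAdjacent S' i) (u : Module.Dual ℝ (Fin n → ℝ)) :
    (∀ m, S'.normal i ⬝ᵥ S.dir m = 0 → 0 ≤ u (castVec (S.dir m))) ↔
      ∀ m, S.normal i ⬝ᵥ S'.dir m = 0 → 0 ≤ u (castVec (S'.dir m)) := by
  refine forall_congr' fun m ↦ ?_
  rcases eq_or_ne m i with rfl | hm
  · simp [h.normal_dotProduct_dir_self, h.dir_self, S.isDualPair m m]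
  · have hdot : S.normal i ⬝ᵥ S'.dir m = S'.normal i ⬝ᵥ S.dir m := by
      rw [h.dir_of_ne hm, dotProduct_add, dotProduct_smul, S.isDualPair i m, S.isDualPair i i,
        if_neg hm.symm, if_pos rfl, zero_add, smul_eq_mul, mul_one]
    rw [hdot]
    refine forall_congr' fun h0 ↦ ?_
    rw [h.dir_of_ne hm, h0, zero_smul, add_zero]

end SmoothVertex.IsAdjacent

end Adjacent

/-- Facet forms `r k x + b k` of `P` with sum `1`. They are the barycentric coordinates of a lattice
projection of `P` to a unimodular simplex. -/
structure IsCayleyFacets {n : ℕ} {ι : Type*} [Fintype ι] (P : Set (Fin n → ℝ))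
    (r : ι → Fin n → ℤ) (b : ι → ℤ) : Prop where
  isFacetForm : ∀ k, IsFacetForm P (r k) (b k)
  sum_linear : ∑ k, r k = 0
  sum_const : ∑ k, b k = 1

/-- The part of `P` on which `r x + b` has the value `1`: a summand of the Cayley structure when
`r x + b` is one of its facet forms. -/
def unitLevel {n : ℕ} (P : Set (Fin n → ℝ)) (r : Fin n → ℤ) (b : ℤ) : Set (Fin n → ℝ) :=
  {x ∈ P | intForm r x + b = 1}

section UnitLevel

variable {n : ℕ} {P : Set (Fin n → ℝ)} {r z : Fin n → ℤ} {b : ℤ}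

theorem castVec_mem_unitLevel_iff :
    castVec z ∈ unitLevel P r b ↔ castVec z ∈ P ∧ r ⬝ᵥ z + b = 1 := by
  rw [unitLevel, Set.mem_sep_iff, intForm_castVec]
  norm_cast

theorem unitLevel_eq (hz : castVec z ∈ unitLevel P r b) :
    unitLevel P r b = {x ∈ P | intForm (-r) x = intForm (-r) (castVec z)} :=
  Set.sep_ext_iff.2 fun x _ ↦ by
    rw [← hz.2, add_left_inj, map_neg, LinearMap.neg_apply, LinearMap.neg_apply, neg_inj]

end UnitLevel

namespace IsCayleyFacets

variable {n : ℕ} {ι : Type*} [Fintype ι] {P : Set (Fin n → ℝ)} {r : ι → Fin n → ℤ} {b : ι → ℤ}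
  {v : Fin n → ℤ} {x : Fin n → ℝ} {k l : ι}

theorem vadd (h : IsCayleyFacets P r b) (d : Fin n → ℤ) :
    IsCayleyFacets (castVec d +ᵥ P) r fun k ↦ b k - r k ⬝ᵥ d where
  isFacetForm k := (h.isFacetForm k).vadd d
  sum_linear := h.sum_linear
  sum_const := by
    rw [Finset.sum_sub_distrib, ← sum_dotProduct, h.sum_linear, h.sum_const, zero_dotProduct,
      sub_zero]

theorem sum_intForm_add (h : IsCayleyFacets P r b) (x : Fin n → ℝ) :
    ∑ k, (intForm (r k) x + b k) = 1 := by
  rw [Finset.sum_add_distrib, ← LinearMap.sum_apply, ← map_sum, h.sum_linear, ← Int.cast_sum,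
    h.sum_const, map_zero, LinearMap.zero_apply, Int.cast_one, zero_add]

theorem card_le_of_hasInteriorLatticePt (h : IsCayleyFacets P r b) {s : ℕ}
    (hs : HasInteriorLatticePt P s) : Fintype.card ι ≤ s := by
  obtain ⟨_, hz, hlat⟩ := hs
  obtain ⟨z, rfl⟩ := isLatticePt_iff_exists_castVec.1 hlat
  have hsum : ∑ k, (r k ⬝ᵥ z + s * b k) = s := by
    rw [Finset.sum_add_distrib, ← sum_dotProduct, h.sum_linear, zero_dotProduct, ← Finset.mul_sum,
      h.sum_const, mul_one, zero_add]
  have hle := Finset.card_nsmul_le_sum Finset.univ (fun k ↦ r k ⬝ᵥ z + s * b k) 1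
    fun k _ ↦ (h.isFacetForm k).pos_of_mem_interior_smul hz
  rw [hsum, Finset.card_univ, nsmul_one] at hle
  exact_mod_cast hle

theorem eq_one_iff (h : IsCayleyFacets P r b) (hx : x ∈ P) :
    intForm (r k) x + b k = 1 ↔ ∀ l ≠ k, intForm (r l) x + b l = 0 := by
  classical
  rw [← h.sum_intForm_add x, ← Finset.add_sum_erase _ _ (Finset.mem_univ k), left_eq_add,
    Finset.sum_eq_zero_iff_of_nonneg fun l _ ↦ (h.isFacetForm l).nonneg x hx]
  simp only [Finset.mem_erase, Finset.mem_univ, and_true]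

theorem intForm_neg_le (h : IsCayleyFacets P r b) (hv : castVec v ∈ unitLevel P (r k) (b k))
    (hx : x ∈ P) : intForm (-r k) (castVec v) ≤ intForm (-r k) x := by
  have hle := Finset.single_le_sum (fun l _ ↦ (h.isFacetForm l).nonneg x hx) (Finset.mem_univ k)
  rw [h.sum_intForm_add] at hle
  simp only [map_neg, LinearMap.neg_apply]
  linarith [hv.2]

theorem forall_le_unitLevel_iff (h : IsCayleyFacets P r b) (S : SmoothVertex P v)
    (hv : castVec v ∈ unitLevel P (r k) (b k)) (u : Module.Dual ℝ (Fin n → ℝ)) :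
    (∀ x ∈ unitLevel P (r k) (b k), u (castVec v) ≤ u x) ↔
      ∀ m, r k ⬝ᵥ S.dir m = 0 → 0 ≤ u (castVec (S.dir m)) := by
  have := S.forall_le_on_face_iff (fun x ↦ h.intForm_neg_le hv) u
  simp only [intForm_castVec, neg_dotProduct, Int.cast_eq_zero, neg_eq_zero] at this
  rw [unitLevel_eq hv, ← this]
  simp [intForm_castVec]

theorem dotProduct_add_eq_zero (h : IsCayleyFacets P r b)
    (hv : castVec v ∈ unitLevel P (r k) (b k)) (hl : l ≠ k) : r l ⬝ᵥ v + b l = 0 := by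
  have := (h.eq_one_iff hv.1).1 hv.2 l hl
  rw [intForm_castVec] at this
  exact_mod_cast this

theorem exists_mem_unitLevel (h : IsCayleyFacets P r b) (hv : castVec v ∈ P) :
    ∃ k, castVec v ∈ unitLevel P (r k) (b k) := by
  have hsum := h.sum_intForm_add (castVec v)
  obtain ⟨k, -, hk⟩ := Finset.exists_lt_of_sum_lt (s := Finset.univ) (f := fun _ : ι ↦ (0 : ℝ))
    (g := fun k ↦ intForm (r k) (castVec v) + b k) (by simp [hsum])
  have hle := Finset.single_le_sum (fun l _ ↦ (h.isFacetForm l).nonneg _ hv) (Finset.mem_univ k)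
  rw [hsum] at hle
  refine ⟨k, castVec_mem_unitLevel_iff.2 ⟨hv, ?_⟩⟩
  rw [intForm_castVec] at hk hle
  norm_cast at hk hle
  omega

theorem exists_isAdjacent (hP : IsSmoothLatticePolytope P) (h : IsCayleyFacets P r b)
    (S : SmoothVertex P v) (hv : castVec v ∈ unitLevel P (r k) (b k)) (hl : l ≠ k) :
    ∃ (i : Fin n) (S' : SmoothVertex P (v + S.dir i)), S.IsAdjacent S' i ∧ S.normal i = r l ∧
      S'.normal i = r k ∧ castVec (v + S.dir i) ∈ unitLevel P (r l) (b l) := by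
  have hl0 := h.dotProduct_add_eq_zero hv hl
  obtain ⟨i, hi⟩ := S.exists_normal_eq (h.isFacetForm l) hl0
  have hmem : castVec (v + S.dir i) ∈ unitLevel P (r l) (b l) := by
    refine castVec_mem_unitLevel_iff.2 ⟨S.add_dir_mem i, ?_⟩
    rw [dotProduct_add, ← hi, S.isDualPair i i, if_pos rfl, hi]
    omega
  have hk1 := (castVec_mem_unitLevel_iff.1 hv).2
  have hk0 := h.dotProduct_add_eq_zero hmem hl.symm
  rw [dotProduct_add] at hk0
  obtain ⟨S', hadj, hS'⟩ :=
    S.exists_isAdjacent_normal_eq hP (h.isFacetForm k) hk1 (i := i) (by omega)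
  exact ⟨i, S', hadj, hi, hS', hmem⟩

theorem exists_castVec_mem_unitLevel (hP : IsSmoothLatticePolytope P) (h : IsCayleyFacets P r b)
    (l : ι) : ∃ v, castVec v ∈ unitLevel P (r l) (b l) := by
  obtain ⟨x, hx, -⟩ := exists_extremePoint_forall_le hP.isLatticePolytope.isCompact
    (hP.nonempty_interior.mono interior_subset) 0
  obtain ⟨v, rfl⟩ := hP.isLatticePolytope.exists_castVec hx
  obtain ⟨S⟩ := hP.nonempty_smoothVertex hx
  obtain ⟨k, hk⟩ := h.exists_mem_unitLevel S.mem
  rcases eq_or_ne l k with rfl | hl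
  · exact ⟨v, hk⟩
  · obtain ⟨i, -, -, -, -, hmem⟩ := h.exists_isAdjacent hP S hk hl
    exact ⟨_, hmem⟩

theorem isFace_unitLevel (hP : IsSmoothLatticePolytope P) (h : IsCayleyFacets P r b) (k : ι) :
    IsFace P (unitLevel P (r k) (b k)) := by
  obtain ⟨v, hv⟩ := h.exists_castVec_mem_unitLevel hP k
  rw [unitLevel_eq hv]
  exact isFace_setOf_minimal _ hv.1 fun x ↦ h.intForm_neg_le hv

theorem exists_forall_le_iff (hP : IsSmoothLatticePolytope P) (h : IsCayleyFacets P r b)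
    (hl : l ≠ k) {x : Fin n → ℝ} (hx : x ∈ (unitLevel P (r k) (b k)).extremePoints ℝ) :
    ∃ x' ∈ unitLevel P (r l) (b l), ∀ u : Module.Dual ℝ (Fin n → ℝ),
      (∀ y ∈ unitLevel P (r k) (b k), u x ≤ u y) ↔
        ∀ y ∈ unitLevel P (r l) (b l), u x' ≤ u y := by
  rw [(h.isFace_unitLevel hP k).extremePoints_eq] at hx
  obtain ⟨v, rfl⟩ := hP.isLatticePolytope.exists_castVec hx.2
  obtain ⟨S⟩ := hP.nonempty_smoothVertex hx.2
  obtain ⟨i, S', hadj, hi, hi', hmem⟩ := h.exists_isAdjacent hP S hx.1 hl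
  refine ⟨_, hmem, fun u ↦ ?_⟩
  rw [h.forall_le_unitLevel_iff S hx.1, h.forall_le_unitLevel_iff S' hmem, ← hi, ← hi',
    hadj.forall_dir_nonneg_iff]

theorem normEquiv_unitLevel (hP : IsSmoothLatticePolytope P) (h : IsCayleyFacets P r b) (k l : ι) :
    NormEquiv (unitLevel P (r k) (b k)) (unitLevel P (r l) (b l)) := by
  have hcompact (k) : IsCompact (unitLevel P (r k) (b k)) :=
    (h.isFace_unitLevel hP k).isExposed.isCompact hP.isLatticePolytope.isCompact
  rcases eq_or_ne k l with rfl | hkl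
  · exact fun _ _ ↦ Iff.rfl
  · exact normEquiv_of_forall_exists (hcompact k) (hcompact l)
      (fun x ↦ h.exists_forall_le_iff hP hkl.symm) fun x ↦ h.exists_forall_le_iff hP hkl

end IsCayleyFacets

/-! ### Cayley sums from Cayley structures -/

section UnitSimplex

variable {n t : ℕ}

theorem matMap_eq_mulVecLin (A : Matrix (Fin t) (Fin n) ℤ) :
    matMap A = (A.map ((↑) : ℤ → ℝ)).mulVecLin := rfl

theorem matMap_of_apply (a : Fin t → Fin n → ℤ) (x : Fin n → ℝ) (j : Fin t) :
    matMap (Matrix.of a) x j = intForm (a j) x := rfl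

theorem stdSimplexVert_apply (k : Fin (t + 1)) (j : Fin t) :
    stdSimplexVert t k j = if k = j.succ then 1 else 0 := by
  simp only [stdSimplexVert, Fin.ext_iff, Fin.val_succ]

theorem sum_smul_stdSimplexVert (c : Fin (t + 1) → ℝ) (j : Fin t) :
    (∑ k, c k • stdSimplexVert t k) j = c j.succ := by
  simp [Finset.sum_apply, stdSimplexVert_apply]

end UnitSimplex

namespace IsCayleyFacets

variable {n t : ℕ} {P : Set (Fin n → ℝ)} {r : Fin (t + 1) → Fin n → ℤ} {b : Fin (t + 1) → ℤ}

theorem matMap_apply (hb : ∀ j : Fin t, b j.succ = 0) (x : Fin n → ℝ) (j : Fin t) :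
    matMap (Matrix.of fun j : Fin t ↦ r j.succ) x j = intForm (r j.succ) x + b j.succ := by
  rw [matMap_of_apply, hb, Int.cast_zero, add_zero]

theorem cayleyPiece_eq_unitLevel (h : IsCayleyFacets P r b) (hb : ∀ j : Fin t, b j.succ = 0)
    (k : Fin (t + 1)) :
    cayleyPiece (Matrix.of fun j : Fin t ↦ r j.succ) P k = unitLevel P (r k) (b k) := by
  refine Set.sep_ext_iff.2 fun x hx ↦ ?_
  simp only [funext_iff, matMap_apply hb, stdSimplexVert_apply]
  refine ⟨fun hvert ↦ ?_, fun hk j ↦ ?_⟩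
  · cases k using Fin.cases with
    | zero =>
      have hsum := h.sum_intForm_add x
      simpa only [Fin.sum_univ_succ, hvert, (Fin.succ_ne_zero _).symm, if_false,
        Finset.sum_const_zero, add_zero] using hsum
    | succ j => rw [hvert, if_pos rfl]
  · split_ifs with hj
    · rw [← hj, hk]
    · exact (h.eq_one_iff hx).1 hk _ (Ne.symm hj)

theorem image_matMap (hP : IsSmoothLatticePolytope P) (h : IsCayleyFacets P r b)
    (hb : ∀ j : Fin t, b j.succ = 0) :
    matMap (Matrix.of fun j : Fin t ↦ r j.succ) '' P = unimodSimplex t := by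
  apply Set.Subset.antisymm
  · rintro _ ⟨x, hx, rfl⟩
    have hbary : matMap (Matrix.of fun j : Fin t ↦ r j.succ) x =
        ∑ k, (intForm (r k) x + b k) • stdSimplexVert t k := by
      ext j
      rw [sum_smul_stdSimplexVert, matMap_apply hb]
    rw [hbary]
    exact (convex_convexHull ℝ _).sum_mem (fun k _ ↦ (h.isFacetForm k).nonneg x hx)
      (h.sum_intForm_add x) fun k _ ↦ subset_convexHull ℝ _ ⟨k, rfl⟩
  · refine convexHull_min ?_ ?_
    · rintro _ ⟨k, rfl⟩
      obtain ⟨v, hv⟩ := h.exists_castVec_mem_unitLevel hP k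
      rw [← h.cayleyPiece_eq_unitLevel hb] at hv
      exact ⟨castVec v, hv⟩
    · rw [matMap_eq_mulVecLin]
      exact hP.isLatticePolytope.convex.linear_image _

theorem exists_mulVec_eq (hP : IsSmoothLatticePolytope P) (h : IsCayleyFacets P r b)
    (hb : ∀ j : Fin t, b j.succ = 0) (y : Fin t → ℤ) :
    ∃ x, (Matrix.of fun j : Fin t ↦ r j.succ).mulVec x = y := by
  choose p hp using h.exists_castVec_mem_unitLevel hP
  have hrp (j k : Fin t) : r j.succ ⬝ᵥ p k.succ = if j = k then 1 else 0 := by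
    split_ifs with hjk
    · rw [hjk, ← (castVec_mem_unitLevel_iff.1 (hp k.succ)).2, hb, add_zero]
    · rw [← h.dotProduct_add_eq_zero (hp k.succ) fun hl ↦ hjk (Fin.succ_injective t hl), hb,
        add_zero]
  refine ⟨∑ k, y k • p k.succ, funext fun j ↦ ?_⟩
  calc r j.succ ⬝ᵥ ∑ k, y k • p k.succ = ∑ k, y k * if j = k then 1 else 0 := by
        simp only [dotProduct_sum, dotProduct_smul, smul_eq_mul, hrp]
    _ = y j := by simp

theorem isCayleyWith (hP : IsSmoothLatticePolytope P) (h : IsCayleyFacets P r b)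
    (hb : ∀ j : Fin t, b j.succ = 0) : IsCayleyWith P (Matrix.of fun j : Fin t ↦ r j.succ) := by
  refine ⟨h.exists_mulVec_eq hP hb, h.image_matMap hP hb, fun k l ↦ ?_⟩
  simp only [h.cayleyPiece_eq_unitLevel hb]
  exact h.normEquiv_unitLevel hP k l

end IsCayleyFacets

section CayleyVertex

variable {n : ℕ} {P : Set (Fin n → ℝ)} {v : Fin n → ℤ}

theorem SmoothVertex.isCayleyFacets (S : SmoothVertex P v) {t : ℕ} (σ : Fin t ↪ Fin n) {b : ℤ}
    (h : IsFacetForm P (-∑ j, S.normal (σ j)) b)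
    (h1 : (-∑ j, S.normal (σ j)) ⬝ᵥ v + b = 1) :
    IsCayleyFacets P (Fin.cons (-∑ j, S.normal (σ j)) fun j ↦ S.normal (σ j) : Fin (t + 1) → _)
      (Fin.cons b fun j ↦ -(S.normal (σ j) ⬝ᵥ v)) where
  isFacetForm := Fin.cases h fun j ↦ S.isFacetForm_normal (σ j)
  sum_linear := by
    simp only [Fin.sum_univ_succ, Fin.cons_zero, Fin.cons_succ, neg_add_cancel]
  sum_const := by
    rw [neg_dotProduct, sum_dotProduct, ← Finset.sum_neg_distrib] at h1
    rwa [Fin.sum_univ_succ, Fin.cons_zero, add_comm]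

theorem IsSmoothLatticePolytope.exists_isCayleyFacets {s : ℕ} (hP : IsSmoothLatticePolytope P)
    (hs : n < 2 * s) (hno : ¬HasInteriorLatticePt P s) :
    ∃ (t : ℕ) (r : Fin (t + 1) → Fin n → ℤ) (b : Fin (t + 1) → ℤ) (d : Fin n → ℤ),
      s ≤ t ∧ IsCayleyFacets P r b ∧ ∀ j : Fin t, b j.succ = r j.succ ⬝ᵥ d := by
  obtain ⟨v, S, N, b, hN, hb, h1⟩ := hP.exists_isFacetForm_neg_sum hs hno
  let σ := (N.orderEmbOfFin rfl).toEmbedding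
  have hsum : ∑ i ∈ N, S.normal i = ∑ j, S.normal (σ j) := by
    conv_lhs => rw [← N.map_orderEmbOfFin_univ rfl, Finset.sum_map]
  rw [hsum] at hb h1
  exact ⟨N.card, _, _, -v, hN, S.isCayleyFacets σ hb h1,
    fun j ↦ (dotProduct_neg _ _).symm⟩

theorem image_unimodMap_one (P : Set (Fin n → ℝ)) (w : Fin n → ℤ) :
    unimodMap 1 w '' P = castVec w +ᵥ P := by
  have hmap : unimodMap 1 w = fun x ↦ castVec w +ᵥ x := by
    ext x i
    simp [unimodMap, castVec, Matrix.one_apply, add_comm]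
  rw [hmap, Set.image_vadd]

end CayleyVertex

section Codegree

variable {n s : ℕ} {P : Set (Fin n → ℝ)}

theorem not_hasInteriorLatticePt_of_lt_codeg (hs : 0 < s) (hlt : s < codeg P) :
    ¬HasInteriorLatticePt P s :=
  fun h ↦ Nat.notMem_of_lt_sInf hlt ⟨hs, h⟩

theorem hasInteriorLatticePt_codeg (hpos : 0 < codeg P) : HasInteriorLatticePt P (codeg P) :=
  (Nat.sInf_mem (Nat.nonempty_of_pos_sInf hpos)).2

theorem IsSmoothLatticePolytope.exists_isCayleyFacets_codeg (hP : IsSmoothLatticePolytope P)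
    (hcd : n + 3 ≤ 2 * codeg P) :
    ∃ (t : ℕ) (r : Fin (t + 1) → Fin n → ℤ) (b : Fin (t + 1) → ℤ) (d : Fin n → ℤ),
      t + 1 = codeg P ∧ IsCayleyFacets P r b ∧ ∀ j : Fin t, b j.succ = r j.succ ⬝ᵥ d := by
  obtain ⟨t, r, b, d, hle, h, hb⟩ := hP.exists_isCayleyFacets (s := codeg P - 1) (by omega)
    (not_hasInteriorLatticePt_of_lt_codeg (by omega) (by omega))
  have hge := h.card_le_of_hasInteriorLatticePt (hasInteriorLatticePt_codeg (by omega))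
  rw [Fintype.card_fin] at hge
  exact ⟨t, r, b, d, by omega, h, hb⟩

end Codegree

/-- A smooth full-dimensional lattice polytope `P ⊆ ℝ^n` satisfies
`cd(P) ≥ (n+3)/2` iff `P` is unimodularly equivalent to a Cayley sum
`Cayley(R_0, …, R_t)_π` of normally equivalent smooth lattice polytopes with
`t + 1 = cd(P)` and `t > n/2`. -/
theorem stmt9 {n : ℕ} (P : Set (Fin n → ℝ)) (hP : IsLatticePolytope P)
    (hfull : affineSpan ℝ P = ⊤) (hsm : IsSmoothPoly P) :
    ((n : ℝ) + 3) / 2 ≤ (codeg P : ℝ) ↔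
      ∃ (t : ℕ) (U : Matrix (Fin n) (Fin n) ℤ) (w : Fin n → ℤ)
        (A : Matrix (Fin t) (Fin n) ℤ), IsUnit U.det ∧
        IsCayleyWith (unimodMap U w '' P) A ∧
        (∀ k : Fin (t + 1),
          IsSmoothPoly (cayleyPiece A (unimodMap U w '' P) k) ∧
          IsLatticePolytope (cayleyPiece A (unimodMap U w '' P) k)) ∧
        t + 1 = codeg P ∧ (n : ℝ) / 2 < (t : ℝ) := by
  rw [div_le_iff₀ two_pos]
  constructor
  · intro hcd
    have hP' : IsSmoothLatticePolytope P := ⟨hP, hfull, hsm⟩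
    have hcd' : n + 3 ≤ codeg P * 2 := mod_cast hcd
    obtain ⟨t, r, b, d, ht, h, hb⟩ := hP'.exists_isCayleyFacets_codeg (by omega)
    have hQ := hP'.vadd d
    have hr := h.vadd d
    have hb0 (j : Fin t) := sub_eq_zero.2 (hb j)
    refine ⟨t, 1, d, Matrix.of fun j ↦ r j.succ, by simp, ?_⟩
    rw [image_unimodMap_one, div_lt_iff₀ two_pos]
    refine ⟨hr.isCayleyWith hQ hb0, fun k ↦ ?_, ht, mod_cast (by omega : n < t * 2)⟩
    have hface := hr.isFace_unitLevel hQ k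
    rw [hr.cayleyPiece_eq_unitLevel hb0]
    exact ⟨hface.isSmoothPoly hQ, hface.isLatticePolytope hQ.isLatticePolytope⟩
  · rintro ⟨t, U, w, A, -, -, -, hcd, ht⟩
    rw [div_lt_iff₀ two_pos] at ht
    have hn : n < t * 2 := mod_cast ht
    exact_mod_cast (by omega : n + 3 ≤ codeg P * 2)
end
end

section
/- Let P ⊂ ℝ^n be a full-dimensional lattice polytope that is a Cayley sum Cayley(R_0, …, R_t)_π of normally equivalent lattice polytopes R_0, …, R_t (each of dimension n − t), with t > n/2. Then cd(P) = μ(P) = t + 1 ≥ (n+3)/2. -/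
noncomputable section

open MeasureTheory Pointwise

/-! Let `R_k` be the pieces of `P`. Normal equivalence forces them to have the same direction space,
so each of the `t + 1` facet inequalities of `Δ_t` pulls back to a facet inequality of `P`. The
normals sum to `0` and the offsets to `-1`, so summing `b_F + s ≤ ⟨a_F, x⟩` over these facets gives
`(t + 1) s ≤ 1` on `P^(s)`, i.e. `t + 1 ≤ μ(P)`. Since `μ(P) ≤ cd(P)` for every lattice polytope,
it remains to find an interior lattice point of `(t + 1) P`.

That point is a sum `∑ x_k` of vertices `x_k` of `R_k`. As `dim R_0 ≤ t`, there are `t + 1` vertices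
of `R_0` spanning its affine hull; take for `x_k` the vertex of `R_k` with the same normal cone as
the `k`-th of them. A functional minimised over `P` at the average of the `x_k` is minimised over
each `R_k` at `x_k`, hence by normal equivalence over `R_0` at all of the chosen vertices. So it is
constant on `R_0`, by normal equivalence constant on every `R_k`, hence on `P`, and therefore
zero. -/

section MinFace

variable {E : Type*} [AddCommGroup E] [Module ℝ E]

/-- The face of `R` on which the linear functional `u` attains its minimum over `R`; it is the set
compared in `NormEquiv`, and is empty when the minimum is not attained. -/
def minFace (R : Set E) (u : E →ₗ[ℝ] ℝ) : Set E := {x ∈ R | ∀ y ∈ R, u x ≤ u y}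

lemma minFace_zero (R : Set E) : minFace R 0 = R := by
  simp [minFace]

lemma vectorSpan_minFace_le_ker (R : Set E) (u : E →ₗ[ℝ] ℝ) :
    vectorSpan ℝ (minFace R u) ≤ LinearMap.ker u := by
  rw [vectorSpan_def, Submodule.span_le]
  rintro _ ⟨x, hx, y, hy, rfl⟩
  simpa [sub_eq_zero] using le_antisymm (hx.2 y hy.1) (hy.2 x hx.1)

lemma minFace_eq_self_iff {R : Set E} {u : E →ₗ[ℝ] ℝ} :
    minFace R u = R ↔ vectorSpan ℝ R ≤ LinearMap.ker u := by
  constructor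
  · intro h
    rw [← h]
    exact vectorSpan_minFace_le_ker R u
  · refine fun h => Set.Subset.antisymm (Set.sep_subset _ _) fun x hx => ⟨hx, fun y hy => ?_⟩
    have hxy : u (x - y) = 0 := h (vsub_mem_vectorSpan ℝ hx hy)
    exact (sub_eq_zero.1 (map_sub u x y ▸ hxy)).le

lemma minFace_add_smul_eq {S : Set E} {g u : E →ₗ[ℝ] ℝ} (hne : (minFace S g).Nonempty)
    (h : minFace S g ⊆ minFace S u) {c : ℝ} (hc : 0 ≤ c) :
    minFace S (g + c • u) = minFace S g := by
  obtain ⟨x, hx⟩ := hne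
  have hle (z : E) (hz : z ∈ S) : c * u x ≤ c * u z := mul_le_mul_of_nonneg_left ((h hx).2 z hz) hc
  ext y
  constructor
  · rintro ⟨hyS, hy⟩
    have hyx := hy x hx.1
    simp only [LinearMap.add_apply, LinearMap.smul_apply, smul_eq_mul] at hyx
    exact ⟨hyS, fun z hz => by linarith [hx.2 z hz, hle y hyS]⟩
  · intro hy
    refine ⟨hy.1, fun z hz => ?_⟩
    simpa using add_le_add (hy.2 z hz) (mul_le_mul_of_nonneg_left ((h hy).2 z hz) hc)

lemma mem_minFace_of_forall_add_smul {R : Set E} {g u : E →ₗ[ℝ] ℝ} {x : E}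
    (h : ∀ c : ℝ, 0 ≤ c → x ∈ minFace R (g + c • u)) : x ∈ minFace R u := by
  refine ⟨(h 0 le_rfl).1, fun y hy => ?_⟩
  by_contra! hlt
  have hg : g x ≤ g y := by simpa using (h 0 le_rfl).2 y hy
  have hd : 0 < u x - u y := sub_pos.2 hlt
  have hc := (h ((g y - g x + 1) / (u x - u y)) (div_nonneg (by linarith) hd.le)).2 y hy
  simp only [LinearMap.add_apply, LinearMap.smul_apply, smul_eq_mul] at hc
  have hmul : (g y - g x + 1) / (u x - u y) * (u x - u y) = g y - g x + 1 :=
    div_mul_cancel₀ _ hd.ne'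
  linarith

lemma mem_minFace_of_sum_mem_minFace {ι : Type*} [Fintype ι] {R : Set E} {u : E →ₗ[ℝ] ℝ}
    {w : ι → ℝ} (hw : ∀ i, 0 < w i) (hw1 : ∑ i, w i = 1) {x : ι → E} (hx : ∀ i, x i ∈ R)
    (h : ∑ i, w i • x i ∈ minFace R u) (i : ι) : x i ∈ minFace R u := by
  set p := ∑ i, w i • x i with hp
  have hnonneg (j : ι) : 0 ≤ w j * (u (x j) - u p) :=
    mul_nonneg (hw j).le (sub_nonneg.2 (h.2 _ (hx j)))
  have hsum : ∑ j, w j * (u (x j) - u p) = 0 := by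
    simp only [mul_sub, Finset.sum_sub_distrib, ← Finset.sum_mul, hw1, one_mul]
    simp [hp]
  have hi := (Finset.sum_eq_zero_iff_of_nonneg fun j _ => hnonneg j).1 hsum i (Finset.mem_univ i)
  have hup : u (x i) = u p := sub_eq_zero.1 ((mul_eq_zero.1 hi).resolve_left (hw i).ne')
  exact ⟨hx i, fun y hy => hup ▸ h.2 y hy⟩

lemma le_apply_of_mem_convexHull {V : Set E} {u : E →ₗ[ℝ] ℝ} {c : ℝ} (h : ∀ v ∈ V, c ≤ u v)
    {y : E} (hy : y ∈ convexHull ℝ V) : c ≤ u y :=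
  convexHull_min (t := {y | c ≤ u y}) h (convex_halfSpace_ge u.isLinear c) hy

lemma convex_insert_halfSpace_gt (u : E →ₗ[ℝ] ℝ) (x : E) :
    Convex ℝ (insert x {y | u x < u y}) := by
  rw [convex_iff_forall_pos]
  rintro y hy z hz a b ha hb hab
  have hxx : a * u x + b * u x = u x := by rw [← add_mul, hab, one_mul]
  rcases hy with rfl | hy <;> rcases hz with rfl | hz
  · exact .inl (Convex.combo_self hab _)
  all_goals
    right
    simp only [Set.mem_ofPred_eq, map_add, map_smul, smul_eq_mul] at *
    nlinarith

lemma exists_mem_minFace_convexHull {V : Set E} (hV : V.Finite) (hne : V.Nonempty)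
    (u : E →ₗ[ℝ] ℝ) : ∃ v ∈ V, v ∈ minFace (convexHull ℝ V) u := by
  obtain ⟨v, hv, hmin⟩ := V.exists_min_image u hV hne
  exact ⟨v, hv, subset_convexHull ℝ V hv, fun y hy => le_apply_of_mem_convexHull hmin hy⟩

lemma minFace_convexHull_eq_singleton_iff {V : Set E} (hV : V.Finite) {u : E →ₗ[ℝ] ℝ} {x : E} :
    minFace (convexHull ℝ V) u = {x} ↔ x ∈ V ∧ ∀ v ∈ V, v ≠ x → u x < u v := by
  constructor
  · intro h
    have hx : x ∈ minFace (convexHull ℝ V) u := h ▸ rfl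
    obtain ⟨v, hv, hmin⟩ := exists_mem_minFace_convexHull hV (convexHull_nonempty_iff.1 ⟨x, hx.1⟩) u
    obtain rfl : v = x := by simpa [h] using hmin
    refine ⟨hv, fun w hw hne => (hx.2 w (subset_convexHull ℝ V hw)).lt_of_ne fun heq => hne ?_⟩
    have hw' : w ∈ minFace (convexHull ℝ V) u :=
      ⟨subset_convexHull ℝ V hw, fun y hy => heq ▸ hx.2 y hy⟩
    simpa [h] using hw'
  · rintro ⟨hxV, hlt⟩
    have hsub : convexHull ℝ V ⊆ insert x {y | u x < u y} :=
      convexHull_min (fun v hv => or_iff_not_imp_left.2 (hlt v hv)) (convex_insert_halfSpace_gt u x)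
    have hx := subset_convexHull ℝ V hxV
    refine Set.eq_singleton_iff_unique_mem.2 ⟨⟨hx, fun y hy => ?_⟩, fun y hy => ?_⟩
    · rcases hsub hy with rfl | h
      exacts [le_rfl, le_of_lt h]
    · exact (hsub hy.1).resolve_right (hy.2 x hx).not_gt

lemma exists_pos_minFace_add_smul_eq_singleton {V : Set E} (hV : V.Finite) {g : E →ₗ[ℝ] ℝ} {x : E}
    (hg : minFace (convexHull ℝ V) g = {x}) (h : E →ₗ[ℝ] ℝ) :
    ∃ ε : ℝ, 0 < ε ∧ minFace (convexHull ℝ V) (g + ε • h) = {x} := by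
  simp only [minFace_convexHull_eq_singleton_iff hV] at hg ⊢
  obtain ⟨hx, hlt⟩ := hg
  have hev : ∀ᶠ ε in nhdsWithin (0 : ℝ) (Set.Ioi 0),
      ∀ v ∈ V, v ≠ x → g x + ε * h x < g v + ε * h v := by
    refine nhdsWithin_le_nhds ((Filter.eventually_all_finite hV).2 fun v hv => ?_)
    refine Filter.eventually_imp_distrib_left.2 fun hne => ?_
    exact ContinuousAt.eventually_lt (by fun_prop) (by fun_prop) (by simpa using hlt v hv hne)
  obtain ⟨ε, hε, hpos⟩ := (hev.and self_mem_nhdsWithin).exists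
  exact ⟨ε, hpos, hx, by simpa using hε⟩

end MinFace

section ConvexGeometry

variable {E : Type*} [AddCommGroup E] [Module ℝ E]

lemma vectorSpan_convexHull (V : Set E) : vectorSpan ℝ (convexHull ℝ V) = vectorSpan ℝ V := by
  rw [← direction_affineSpan, affineSpan_convexHull, direction_affineSpan]

lemma exists_vectorSpan_range_eq [FiniteDimensional ℝ E] {S : Set E} (hS : S.Nonempty)
    {ι : Type*} [Fintype ι] (hι : Module.finrank ℝ (vectorSpan ℝ S) < Fintype.card ι) :
    ∃ σ : ι → E, (∀ i, σ i ∈ S) ∧ vectorSpan ℝ (Set.range σ) = vectorSpan ℝ S := by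
  obtain ⟨T, hTS, hspan, hT⟩ := exists_affineIndependent ℝ E S
  have hTne : T.Nonempty := by rwa [← affineSpan_nonempty ℝ, hspan, affineSpan_nonempty]
  have hdir : vectorSpan ℝ T = vectorSpan ℝ S := by
    rw [← direction_affineSpan, hspan, direction_affineSpan]
  have : Fintype T := @Fintype.ofFinite _ (finite_of_fin_dim_affineIndependent ℝ hT)
  have : Nonempty T := hTne.to_subtype
  have hcard : Fintype.card T ≤ Fintype.card ι := by
    rw [← hT.finrank_vectorSpan_add_one, Subtype.range_coe, hdir]
    exact hι
  obtain ⟨e⟩ := Function.Embedding.nonempty_of_card_le hcard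
  refine ⟨Subtype.val ∘ Function.invFun e, fun i => hTS (Function.invFun e i).2, ?_⟩
  rw [(Function.invFun_surjective e.injective).range_comp, Subtype.range_coe, hdir]

lemma eq_ker_of_sup_span_singleton_eq_top {W : Submodule ℝ E} {u : E →ₗ[ℝ] ℝ} {d : E}
    (hW : W ≤ LinearMap.ker u) (hd : u d ≠ 0) (h : W ⊔ Submodule.span ℝ {d} = ⊤) :
    W = LinearMap.ker u := by
  refine eq_of_le_of_inf_le_of_sup_le hW (z := Submodule.span ℝ {d}) ?_ (h ▸ le_top)
  rintro _ ⟨hker, hspan⟩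
  obtain ⟨c, rfl⟩ := Submodule.mem_span_singleton.1 hspan
  have hc : c = 0 := by simpa [hd] using hker
  simp [hc]

variable [TopologicalSpace E] [IsTopologicalAddGroup E] [ContinuousSMul ℝ E]

lemma lt_apply_of_mem_interior [FiniteDimensional ℝ E] {S : Set E} {u : E →ₗ[ℝ] ℝ} (hu : u ≠ 0)
    {c : ℝ} (h : ∀ y ∈ S, c ≤ u y) {x : E} (hx : x ∈ interior S) : c < u x := by
  have hopen : IsOpenMap u := u.isOpenMap_of_finiteDimensional (LinearMap.surjective hu)
  have hux : u x ∈ interior (Set.Ici c) :=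
    interior_mono (Set.image_subset_iff.2 h) (hopen.image_interior_subset S ⟨x, hx, rfl⟩)
  rwa [interior_Ici] at hux

lemma mem_interior_of_forall_mem_minFace {P : Set E} (hP : Convex ℝ P)
    (hint : (interior P).Nonempty) {p : E} (hp : p ∈ P)
    (h : ∀ u : E →ₗ[ℝ] ℝ, p ∈ minFace P u → u = 0) : p ∈ interior P := by
  by_contra hnot
  obtain ⟨f, hf, hmax⟩ := geometric_hahn_banach_of_nonempty_interior_point hP hnot hint
  refine hf (neg_eq_zero.1 (ContinuousLinearMap.coe_injective (h _ ⟨hp, fun y hy => ?_⟩)))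
  simpa using hmax y hy

variable [T2Space E] [LocallyConvexSpace ℝ E]

lemma convexHull_extremePoints_convexHull {V : Set E} (hV : V.Finite) :
    convexHull ℝ ((convexHull ℝ V).extremePoints ℝ) = convexHull ℝ V := by
  have hclosed : IsClosed (convexHull ℝ ((convexHull ℝ V).extremePoints ℝ)) :=
    (hV.subset extremePoints_convexHull_subset).isClosed_convexHull ℝ
  rw [← hclosed.closure_eq,
    closure_convexHull_extremePoints (hV.isCompact_convexHull ℝ) (convex_convexHull ℝ V)]

lemma exists_mem_extremePoints_vectorSpan_range_eq [FiniteDimensional ℝ E] {V : Set E}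
    (hV : V.Finite) (hne : V.Nonempty) {ι : Type*} [Fintype ι]
    (hι : Module.finrank ℝ (vectorSpan ℝ (convexHull ℝ V)) < Fintype.card ι) :
    ∃ σ : ι → E, (∀ i, σ i ∈ (convexHull ℝ V).extremePoints ℝ) ∧
      vectorSpan ℝ (Set.range σ) = vectorSpan ℝ (convexHull ℝ V) := by
  have hext := convexHull_extremePoints_convexHull hV
  have hextne : ((convexHull ℝ V).extremePoints ℝ).Nonempty := by
    rw [← convexHull_nonempty_iff (𝕜 := ℝ), hext]
    exact hne.convexHull
  have hspan := vectorSpan_convexHull ((convexHull ℝ V).extremePoints ℝ)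
  rw [hext] at hspan
  rw [hspan] at hι ⊢
  exact exists_vectorSpan_range_eq hextne hι

lemma exists_minFace_eq_singleton_of_mem_extremePoints {V : Set E} (hV : V.Finite) {x : E}
    (hx : x ∈ (convexHull ℝ V).extremePoints ℝ) :
    ∃ u : E →ₗ[ℝ] ℝ, minFace (convexHull ℝ V) u = {x} := by
  have hnot : x ∉ convexHull ℝ (V \ {x}) := fun hmem =>
    ((convex_convexHull ℝ V).mem_extremePoints_iff_mem_sdiff_convexHull_sdiff.1 hx).2
      (convexHull_mono (Set.sdiff_subset_sdiff_left (subset_convexHull ℝ V)) hmem)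
  obtain ⟨f, c, hxc, hc⟩ := geometric_hahn_banach_point_closed (convex_convexHull ℝ (V \ {x}))
    (hV.sdiff.isClosed_convexHull ℝ) hnot
  refine ⟨f, (minFace_convexHull_eq_singleton_iff hV).2
    ⟨extremePoints_convexHull_subset hx, fun v hv hne => ?_⟩⟩
  exact hxc.trans (hc v (subset_convexHull ℝ _ ⟨hv, hne⟩))

end ConvexGeometry

section NormEquiv

variable {n : ℕ} {R S : Set (Fin n → ℝ)}

namespace NormEquiv

lemma minFace_eq_iff (h : NormEquiv R S) (u v : (Fin n → ℝ) →ₗ[ℝ] ℝ) :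
    minFace R u = minFace R v ↔ minFace S u = minFace S v :=
  h u v

lemma minFace_eq_self_iff (h : NormEquiv R S) (u : (Fin n → ℝ) →ₗ[ℝ] ℝ) :
    minFace R u = R ↔ minFace S u = S := by
  simpa only [minFace_zero] using h.minFace_eq_iff u 0

lemma vectorSpan_eq (h : NormEquiv R S) : vectorSpan ℝ R = vectorSpan ℝ S := by
  rw [← Subspace.dualAnnihilator_inj]
  ext u
  simpa only [_root_.minFace_eq_self_iff, Submodule.mem_dualAnnihilator, SetLike.le_def,
    LinearMap.mem_ker] using h.minFace_eq_self_iff u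

lemma minFace_mono (h : NormEquiv R S) {g u : (Fin n → ℝ) →ₗ[ℝ] ℝ}
    (hne : (minFace S g).Nonempty) (hS : minFace S g ⊆ minFace S u) :
    minFace R g ⊆ minFace R u := fun x hx =>
  mem_minFace_of_forall_add_smul fun c hc => by
    rwa [(h.minFace_eq_iff (g + c • u) g).2 (minFace_add_smul_eq hne hS hc)]

-- Vertices correspond: moving `g` within the open normal cone of `x` cannot change `minFace S g`,
-- so every functional is constant on that face.
lemma exists_minFace_eq_singleton {V : Set (Fin n → ℝ)} (hV : V.Finite)
    (h : NormEquiv (convexHull ℝ V) S) {g : (Fin n → ℝ) →ₗ[ℝ] ℝ} {x : Fin n → ℝ}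
    (hg : minFace (convexHull ℝ V) g = {x}) (hne : (minFace S g).Nonempty) :
    ∃ y, minFace S g = {y} := by
  obtain ⟨y, hy⟩ := hne
  refine ⟨y, Set.eq_singleton_iff_unique_mem.2 ⟨hy, fun z hz => funext fun i => ?_⟩⟩
  obtain ⟨ε, hε, hgε⟩ := exists_pos_minFace_add_smul_eq_singleton hV hg (LinearMap.proj i)
  have hface : minFace S g = minFace S (g + ε • LinearMap.proj i) :=
    (h.minFace_eq_iff _ _).1 (hg.trans hgε.symm)
  have hgzy : g z = g y := le_antisymm (hz.2 y hy.1) (hy.2 z hz.1)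
  have hker := vectorSpan_minFace_le_ker S (g + ε • LinearMap.proj i)
    (hface ▸ vsub_mem_vectorSpan ℝ hz hy)
  have hzero : ε * (z i - y i) = 0 := by simpa [hgzy, mul_sub] using hker
  exact sub_eq_zero.1 ((mul_eq_zero.1 hzero).resolve_left hε.ne')

end NormEquiv

theorem exists_vertices_forall_minFace_eq_self {ι : Type*} [Fintype ι]
    {V : ι → Set (Fin n → ℝ)} (hfin : ∀ i, (V i).Finite) (hne : ∀ i, (V i).Nonempty)
    (h : ∀ i j, NormEquiv (convexHull ℝ (V i)) (convexHull ℝ (V j))) (i₀ : ι)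
    (hdim : fdim (convexHull ℝ (V i₀)) < Fintype.card ι) :
    ∃ x : ι → Fin n → ℝ, (∀ i, x i ∈ V i) ∧ ∀ u : (Fin n → ℝ) →ₗ[ℝ] ℝ,
      (∀ i, x i ∈ minFace (convexHull ℝ (V i)) u) →
        ∀ i, minFace (convexHull ℝ (V i)) u = convexHull ℝ (V i) := by
  obtain ⟨σ, hσ, hσspan⟩ :=
    exists_mem_extremePoints_vectorSpan_range_eq (hfin i₀) (hne i₀) hdim
  choose g hg using fun i => exists_minFace_eq_singleton_of_mem_extremePoints (hfin i₀) (hσ i)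
  have hgne (i) : (minFace (convexHull ℝ (V i)) (g i)).Nonempty :=
    (exists_mem_minFace_convexHull (hfin i) (hne i) (g i)).imp fun _ hv => hv.2
  choose x hx using fun i => (h i₀ i).exists_minFace_eq_singleton (hfin i₀) (hg i) (hgne i)
  refine ⟨x, fun i => ((minFace_convexHull_eq_singleton_iff (hfin i)).1 (hx i)).1, fun u hu i => ?_⟩
  have hσu : Set.range σ ⊆ minFace (convexHull ℝ (V i₀)) u := by
    rintro _ ⟨j, rfl⟩
    refine (h i₀ j).minFace_mono (hgne j) ?_ (hg j ▸ rfl)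
    rw [hx j, Set.singleton_subset_iff]
    exact hu j
  have hconst : vectorSpan ℝ (convexHull ℝ (V i₀)) ≤ LinearMap.ker u := by
    rw [← hσspan]
    exact (vectorSpan_mono ℝ hσu).trans (vectorSpan_minFace_le_ker _ u)
  exact ((h i₀ i).minFace_eq_self_iff u).1 (minFace_eq_self_iff.2 hconst)

end NormEquiv

section Lattice

variable {n : ℕ}

/-- The pairing `iprod a` with an integer vector, bundled as a real linear functional. -/
def iprodLin (a : Fin n → ℤ) : (Fin n → ℝ) →ₗ[ℝ] ℝ where
  toFun := iprod a
  map_add' x y := by simp [iprod, mul_add, Finset.sum_add_distrib]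
  map_smul' c x := by simp [iprod, Finset.mul_sum, mul_left_comm]

lemma iprodLin_apply (a : Fin n → ℤ) (x : Fin n → ℝ) : iprodLin a x = iprod a x := rfl

lemma iprodLin_ne_zero {a : Fin n → ℤ} (ha : a ≠ 0) : iprodLin a ≠ 0 := by
  obtain ⟨i, hi⟩ := Function.ne_iff.1 ha
  intro h
  have hsingle := LinearMap.congr_fun h (Pi.single i 1)
  exact hi (by simpa [iprodLin_apply, iprod, Pi.single_apply] using hsingle)

lemma IsLatticePt.exists_iprod_eq {x : Fin n → ℝ} (hx : IsLatticePt x) (a : Fin n → ℤ) :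
    ∃ z : ℤ, iprod a x = z := by
  choose z hz using hx
  exact ⟨∑ i, a i * z i, by simp [iprod, hz]⟩

lemma IsLatticePt.sum {ι : Type*} {s : Finset ι} {x : ι → Fin n → ℝ}
    (hx : ∀ k ∈ s, IsLatticePt (x k)) : IsLatticePt (∑ k ∈ s, x k) := by
  intro i
  choose! z hz using fun k hk => hx k hk i
  exact ⟨∑ k ∈ s, z k, by simp [Finset.sum_congr rfl hz]⟩

lemma isPrimitive_of_iprod_sub_eq_one {a : Fin n → ℤ} {x y : Fin n → ℝ} (hx : IsLatticePt x)
    (hy : IsLatticePt y) (h : iprod a x - iprod a y = 1) : IsPrimitive a := by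
  choose p hp using hx
  choose q hq using hy
  have hone : ∑ i, a i * (p i - q i) = 1 := by
    simp only [iprod, hp, hq, ← Finset.sum_sub_distrib, ← mul_sub] at h
    exact_mod_cast h
  refine ⟨?_, fun d hd => ?_⟩
  · rintro rfl
    simp at hone
  · rw [isUnit_iff_dvd_one, ← hone]
    exact Finset.dvd_sum fun i _ => (hd i).mul_right _

namespace IsLatticePolytope

variable {P : Set (Fin n → ℝ)}

lemma convex_s11 (hP : IsLatticePolytope P) : Convex ℝ P := by
  obtain ⟨V, -, rfl⟩ := hP
  exact convex_convexHull ℝ _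

lemma exists_isLatticePt (hP : IsLatticePolytope P) (hne : P.Nonempty) :
    ∃ x ∈ P, IsLatticePt x := by
  obtain ⟨V, hVlat, rfl⟩ := hP
  obtain ⟨v, hv⟩ := convexHull_nonempty_iff.1 hne
  exact ⟨v, subset_convexHull ℝ _ hv, hVlat v hv⟩

lemma exists_int_of_isFacetIneq (hP : IsLatticePolytope P) {a : Fin n → ℤ} {b : ℝ}
    (hab : IsFacetIneq P a b) : ∃ z : ℤ, b = z := by
  obtain ⟨V, hVlat, rfl⟩ := hP
  obtain ⟨-, hge, ⟨y, hy, rfl⟩, -⟩ := hab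
  obtain ⟨v, hv, hmin⟩ := exists_mem_minFace_convexHull V.finite_toSet
    (convexHull_nonempty_iff.1 ⟨y, hy⟩) (iprodLin a)
  obtain ⟨z, hz⟩ := (hVlat v hv).exists_iprod_eq a
  exact ⟨z, hz ▸ le_antisymm (hge v hmin.1) (hmin.2 y hy)⟩

end IsLatticePolytope

lemma mul_add_one_le_iprod_of_mem_interior_smul {P : Set (Fin n → ℝ)} {a : Fin n → ℤ} (ha : a ≠ 0)
    {b : ℤ} (h : ∀ x ∈ P, (b : ℝ) ≤ iprod a x) {s : ℕ} {x : Fin n → ℝ}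
    (hx : x ∈ interior ((s : ℝ) • P)) (hlat : IsLatticePt x) : (s : ℝ) * b + 1 ≤ iprod a x := by
  have hlt : (s : ℝ) * b < iprodLin a x := by
    refine lt_apply_of_mem_interior (iprodLin_ne_zero ha) ?_ hx
    rintro _ ⟨y, hy, rfl⟩
    simpa [iprodLin_apply] using mul_le_mul_of_nonneg_left (h y hy) s.cast_nonneg
  obtain ⟨z, hz⟩ := hlat.exists_iprod_eq a
  rw [iprodLin_apply, hz] at hlt
  rw [hz]
  exact_mod_cast Int.add_one_le_of_lt (by exact_mod_cast hlt)

-- This is `μ(P) ≤ cd(P)`: for integral facet offsets an interior lattice point of `s • P` has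
-- lattice distance at least one from every facet.
theorem IsLatticePolytope.inv_mem_muSet {P : Set (Fin n → ℝ)} (hP : IsLatticePolytope P) {s : ℕ}
    (hs : 0 < s) (h : HasInteriorLatticePt P s) : (s : ℝ)⁻¹ ∈ muSet P := by
  obtain ⟨x, hx, hlat⟩ := h
  have hs' : (0 : ℝ) < s := by exact_mod_cast hs
  refine ⟨inv_pos.2 hs', (s : ℝ)⁻¹ • x, fun a b hab => ?_⟩
  obtain ⟨z, rfl⟩ := hP.exists_int_of_isFacetIneq hab
  have hle := mul_add_one_le_iprod_of_mem_interior_smul hab.1.1 hab.2.1 hx hlat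
  rw [← iprodLin_apply, map_smul, iprodLin_apply, smul_eq_mul, inv_mul_eq_div, le_div_iff₀ hs',
    add_mul, inv_mul_cancel₀ hs'.ne', mul_comm]
  exact hle

lemma exists_eq_single_of_mem_stdSimplex {ι : Type*} [Fintype ι] [DecidableEq ι] {w : ι → ℝ}
    (hw : w ∈ stdSimplex ℝ ι) (hint : ∀ i, ∃ z : ℤ, w i = z) : ∃ i, w = Pi.single i 1 := by
  obtain ⟨i, -, hi⟩ := Finset.exists_ne_zero_of_sum_ne_zero (hw.2.trans_ne one_ne_zero)
  have hi1 : 1 ≤ w i := by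
    obtain ⟨z, hz⟩ := hint i
    have hpos := (hw.1 i).lt_of_ne' hi
    rw [hz] at hpos ⊢
    exact_mod_cast hpos
  have hsplit := Finset.add_sum_erase Finset.univ w (Finset.mem_univ i)
  rw [hw.2] at hsplit
  have hrest : ∑ j ∈ Finset.univ.erase i, w j = 0 :=
    le_antisymm (by linarith) (Finset.sum_nonneg fun j _ => hw.1 j)
  refine ⟨i, funext fun j => ?_⟩
  by_cases hj : j = i
  · subst hj
    rw [Pi.single_eq_same]
    linarith
  · rw [Pi.single_eq_of_ne hj]
    exact (Finset.sum_eq_zero_iff_of_nonneg fun j _ => hw.1 j).1 hrest j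
      (Finset.mem_erase.2 ⟨hj, Finset.mem_univ j⟩)

end Lattice

section Cayley

variable {n t : ℕ} {A : Matrix (Fin t) (Fin n) ℤ} {P : Set (Fin n → ℝ)}

lemma stdSimplexVert_eq_tail_single (t : ℕ) (k : Fin (t + 1)) :
    stdSimplexVert t k = LinearMap.funLeft ℝ ℝ Fin.succ (Pi.single k 1) := by
  ext j
  simp [stdSimplexVert, LinearMap.funLeft_apply, Pi.single_apply, Fin.ext_iff, eq_comm]

lemma unimodSimplex_eq_image_stdSimplex (t : ℕ) :
    unimodSimplex t = LinearMap.funLeft ℝ ℝ Fin.succ '' stdSimplex ℝ (Fin (t + 1)) := by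
  rw [← convexHull_rangle_single_eq_stdSimplex, LinearMap.image_convexHull, ← Set.range_comp]
  exact congrArg (fun f => convexHull ℝ (Set.range f)) (funext (stdSimplexVert_eq_tail_single t))

/-- Inner normals of the half-spaces of `ℝ^n` pulled back along `matMap A` from the facets of `Δ_t`:
index `0` is the facet `∑ y_j ≤ 1` opposite to the origin, index `j + 1` the facet `0 ≤ y_j`. -/
def cayleyNormal (A : Matrix (Fin t) (Fin n) ℤ) : Fin (t + 1) → Fin n → ℤ :=
  Fin.cons (-∑ j, A.row j) A.row

/-- Offsets of the facet inequalities of `Δ_t` with the indexing and normals of `cayleyNormal`. -/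
def cayleyOffset (t : ℕ) : Fin (t + 1) → ℤ := Fin.cons (-1) 0

/-- The barycentric coordinates of `matMap A x` with respect to the vertices of `Δ_t`, written as
slacks of the inequalities `cayleyOffset t k ≤ ⟨cayleyNormal A k, x⟩`. -/
def cayleyCoord (A : Matrix (Fin t) (Fin n) ℤ) (x : Fin n → ℝ) (k : Fin (t + 1)) : ℝ :=
  iprod (cayleyNormal A k) x - cayleyOffset t k

/-- The face of `P` cut out by equality in the `k`-th inequality pulled back from `Δ_t`; it is the
convex hull of the pieces `cayleyPiece A P l` with `l ≠ k`. -/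
def cayleyFacet (A : Matrix (Fin t) (Fin n) ℤ) (P : Set (Fin n → ℝ)) (k : Fin (t + 1)) :
    Set (Fin n → ℝ) :=
  {z ∈ P | iprod (cayleyNormal A k) z = cayleyOffset t k}

lemma cayleyCoord_succ (A : Matrix (Fin t) (Fin n) ℤ) (x : Fin n → ℝ) (j : Fin t) :
    cayleyCoord A x j.succ = matMap A x j := by
  simp [cayleyCoord, cayleyNormal, cayleyOffset, iprod, matMap]

lemma sum_cayleyCoord (A : Matrix (Fin t) (Fin n) ℤ) (x : Fin n → ℝ) :
    ∑ k, cayleyCoord A x k = 1 := by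
  have hzero : cayleyCoord A x 0 = 1 - ∑ j, matMap A x j := by
    simp only [cayleyCoord, cayleyNormal, cayleyOffset, iprod, matMap, Fin.cons_zero]
    rw [Finset.sum_comm]
    simp [Finset.sum_mul, sub_eq_add_neg, add_comm]
  simp [Fin.sum_univ_succ, hzero, cayleyCoord_succ]

lemma cayleyCoord_eq_iff {x : Fin n → ℝ} {w : Fin (t + 1) → ℝ} (hw : ∑ k, w k = 1) :
    cayleyCoord A x = w ↔ matMap A x = LinearMap.funLeft ℝ ℝ Fin.succ w := by
  constructor
  · rintro rfl
    exact funext fun j => (cayleyCoord_succ A x j).symm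
  · intro h
    have hsucc (j : Fin t) : cayleyCoord A x j.succ = w j.succ := by rw [cayleyCoord_succ, h]; rfl
    have hsum := (sum_cayleyCoord A x).trans hw.symm
    simp only [Fin.sum_univ_succ, hsucc, add_left_inj] at hsum
    exact funext (Fin.cases hsum hsucc)

lemma mem_cayleyPiece_iff {x : Fin n → ℝ} {k : Fin (t + 1)} :
    x ∈ cayleyPiece A P k ↔ x ∈ P ∧ cayleyCoord A x = Pi.single k 1 := by
  rw [cayleyCoord_eq_iff (by simp), ← stdSimplexVert_eq_tail_single]
  rfl

lemma cayleyPiece_subset_cayleyFacet {k l : Fin (t + 1)} (hlk : l ≠ k) :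
    cayleyPiece A P l ⊆ cayleyFacet A P k := fun z hz => by
  obtain ⟨hzP, hcoord⟩ := mem_cayleyPiece_iff.1 hz
  exact ⟨hzP, sub_eq_zero.1 ((congrFun hcoord k).trans (Pi.single_eq_of_ne hlk.symm _))⟩

lemma cayleyCoord_mem_stdSimplex (hA : matMap A '' P = unimodSimplex t) {x : Fin n → ℝ}
    (hx : x ∈ P) : cayleyCoord A x ∈ stdSimplex ℝ (Fin (t + 1)) := by
  obtain ⟨w, hw, hwx⟩ : matMap A x ∈ LinearMap.funLeft ℝ ℝ Fin.succ '' stdSimplex ℝ _ := by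
    rw [← unimodSimplex_eq_image_stdSimplex, ← hA]
    exact Set.mem_image_of_mem _ hx
  rwa [(cayleyCoord_eq_iff hw.2).2 hwx.symm]

lemma cayleyPiece_nonempty (hA : matMap A '' P = unimodSimplex t) (k : Fin (t + 1)) :
    (cayleyPiece A P k).Nonempty := by
  obtain ⟨x, hx, hxk⟩ : stdSimplexVert t k ∈ matMap A '' P :=
    hA ▸ subset_convexHull ℝ _ (Set.mem_range_self k)
  exact ⟨x, hx, hxk⟩

lemma exists_mem_cayleyPiece_of_isLatticePt (hA : matMap A '' P = unimodSimplex t)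
    {x : Fin n → ℝ} (hx : x ∈ P) (hlat : IsLatticePt x) : ∃ k, x ∈ cayleyPiece A P k := by
  have hint (k) : ∃ z : ℤ, cayleyCoord A x k = z := by
    obtain ⟨z, hz⟩ := hlat.exists_iprod_eq (cayleyNormal A k)
    exact ⟨z - cayleyOffset t k, by simp [cayleyCoord, hz]⟩
  obtain ⟨k, hk⟩ := exists_eq_single_of_mem_stdSimplex (cayleyCoord_mem_stdSimplex hA hx) hint
  exact ⟨k, mem_cayleyPiece_iff.2 ⟨hx, hk⟩⟩

lemma convexHull_iUnion_cayleyPiece (hP : IsLatticePolytope P)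
    (hA : matMap A '' P = unimodSimplex t) : convexHull ℝ (⋃ k, cayleyPiece A P k) = P := by
  refine (convexHull_min (Set.iUnion_subset fun k => Set.sep_subset _ _) hP.convex_s11).antisymm ?_
  obtain ⟨V, hVlat, rfl⟩ := hP
  refine convexHull_mono fun v hv => Set.mem_iUnion.2 ?_
  exact exists_mem_cayleyPiece_of_isLatticePt hA (subset_convexHull ℝ _ hv) (hVlat v hv)

lemma vectorSpan_iUnion_cayleyPiece (hP : IsLatticePolytope P) (hfull : affineSpan ℝ P = ⊤)
    (hA : matMap A '' P = unimodSimplex t) : vectorSpan ℝ (⋃ k, cayleyPiece A P k) = ⊤ := by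
  rw [← vectorSpan_convexHull, convexHull_iUnion_cayleyPiece hP hA, ← direction_affineSpan, hfull,
    AffineSubspace.direction_top]

namespace IsCayleyWith

lemma vectorSpan_cayleyFacet_sup_span_singleton (hP : IsLatticePolytope P)
    (hfull : affineSpan ℝ P = ⊤) (hC : IsCayleyWith P A) {k l : Fin (t + 1)} (hlk : l ≠ k)
    {x y : Fin n → ℝ} (hx : x ∈ cayleyPiece A P k) (hy : y ∈ cayleyPiece A P l) :
    vectorSpan ℝ (cayleyFacet A P k) ⊔ Submodule.span ℝ {x - y} = ⊤ := by
  obtain ⟨-, hA, hNE⟩ := hC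
  rw [eq_top_iff, ← vectorSpan_iUnion_cayleyPiece hP hfull hA,
    vectorSpan_eq_span_vsub_set_right ℝ (Set.mem_iUnion_of_mem l hy), Submodule.span_le]
  rintro _ ⟨z, hz, rfl⟩
  change z - y ∈ _
  obtain ⟨m, hm⟩ := Set.mem_iUnion.1 hz
  by_cases hmk : m = k
  · subst hmk
    have hzx : z - x ∈ vectorSpan ℝ (cayleyFacet A P m) := by
      refine vectorSpan_mono ℝ (cayleyPiece_subset_cayleyFacet hlk) ?_
      rw [← (hNE m l).vectorSpan_eq]
      exact vsub_mem_vectorSpan ℝ hm hx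
    rw [← sub_add_sub_cancel z x y]
    exact Submodule.add_mem_sup hzx (Submodule.mem_span_singleton_self _)
  · exact Submodule.mem_sup_left (vsub_mem_vectorSpan ℝ (cayleyPiece_subset_cayleyFacet hmk hm)
      (cayleyPiece_subset_cayleyFacet hlk hy))

lemma vectorSpan_cayleyFacet_eq_ker (hP : IsLatticePolytope P) (hfull : affineSpan ℝ P = ⊤)
    (hC : IsCayleyWith P A) {k l : Fin (t + 1)} (hlk : l ≠ k) :
    vectorSpan ℝ (cayleyFacet A P k) = LinearMap.ker (iprodLin (cayleyNormal A k)) := by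
  obtain ⟨x, hx⟩ := cayleyPiece_nonempty hC.2.1 k
  obtain ⟨y, hy⟩ := cayleyPiece_nonempty hC.2.1 l
  have hxy : iprodLin (cayleyNormal A k) (x - y) = 1 := by
    have hxk := congrFun (mem_cayleyPiece_iff.1 hx).2 k
    rw [Pi.single_eq_same, cayleyCoord] at hxk
    rw [map_sub, iprodLin_apply, iprodLin_apply, (cayleyPiece_subset_cayleyFacet hlk hy).2, hxk]
  refine eq_ker_of_sup_span_singleton_eq_top ?_ (hxy ▸ one_ne_zero)
    (vectorSpan_cayleyFacet_sup_span_singleton hP hfull hC hlk hx hy)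
  rw [vectorSpan_def, Submodule.span_le]
  rintro _ ⟨a, ha, b, hb, rfl⟩
  simp only [vsub_eq_sub, SetLike.mem_coe, LinearMap.mem_ker, map_sub, iprodLin_apply, ha.2, hb.2,
    sub_self]

theorem isFacetIneq_cayleyNormal (hP : IsLatticePolytope P) (hfull : affineSpan ℝ P = ⊤)
    (hC : IsCayleyWith P A) (hpieces : ∀ k, IsLatticePolytope (cayleyPiece A P k)) (ht : 0 < t)
    (k : Fin (t + 1)) : IsFacetIneq P (cayleyNormal A k) (cayleyOffset t k) := by
  have hA := hC.2.1
  have : Nontrivial (Fin (t + 1)) := Fin.nontrivial_iff_two_le.2 (by omega)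
  obtain ⟨l, hl⟩ := exists_ne k
  obtain ⟨x, hx, hxlat⟩ := (hpieces k).exists_isLatticePt (cayleyPiece_nonempty hA k)
  obtain ⟨y, hy, hylat⟩ := (hpieces l).exists_isLatticePt (cayleyPiece_nonempty hA l)
  have hxk : cayleyCoord A x k = 1 := by simp [(mem_cayleyPiece_iff.1 hx).2]
  have hyk : cayleyCoord A y k = 0 := by simp [(mem_cayleyPiece_iff.1 hy).2, hl.symm]
  have hprim : IsPrimitive (cayleyNormal A k) :=
    isPrimitive_of_iprod_sub_eq_one hxlat hylat (by unfold cayleyCoord at hxk hyk; linarith)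
  refine ⟨hprim, fun z hz => sub_nonneg.1 ((cayleyCoord_mem_stdSimplex hA hz).1 k),
    ⟨y, hy.1, sub_eq_zero.1 hyk⟩, ?_⟩
  change Module.finrank ℝ (vectorSpan ℝ (cayleyFacet A P k)) = n - 1
  rw [vectorSpan_cayleyFacet_eq_ker hP hfull hC hl]
  have hker := Module.Dual.finrank_ker_add_one_of_ne_zero (iprodLin_ne_zero hprim.1)
  rw [Module.finrank_fin_fun] at hker
  omega

theorem le_inv_of_mem_muSet (hP : IsLatticePolytope P) (hfull : affineSpan ℝ P = ⊤)
    (hC : IsCayleyWith P A) (hpieces : ∀ k, IsLatticePolytope (cayleyPiece A P k)) (ht : 0 < t)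
    {s : ℝ} (hs : s ∈ muSet P) : s ≤ ((t : ℝ) + 1)⁻¹ := by
  obtain ⟨-, x, hx⟩ := hs
  have hle (k : Fin (t + 1)) : s ≤ cayleyCoord A x k :=
    le_sub_iff_add_le'.2 (hx _ _ (isFacetIneq_cayleyNormal hP hfull hC hpieces ht k))
  have hsum : ∑ _k : Fin (t + 1), s ≤ ∑ k, cayleyCoord A x k := Finset.sum_le_sum fun k _ => hle k
  rw [sum_cayleyCoord, Finset.sum_const, Finset.card_univ, Fintype.card_fin, nsmul_eq_mul] at hsum
  rw [← one_div, le_div_iff₀' (by positivity)]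
  exact_mod_cast hsum

lemma exists_isLatticePt_forall_minFace_eq_self (hC : IsCayleyWith P A)
    (hpieces : ∀ k, IsLatticePolytope (cayleyPiece A P k))
    (hdim : fdim (cayleyPiece A P 0) ≤ t) :
    ∃ x : Fin (t + 1) → Fin n → ℝ, (∀ k, x k ∈ cayleyPiece A P k ∧ IsLatticePt (x k)) ∧
      ∀ u : (Fin n → ℝ) →ₗ[ℝ] ℝ, (∀ k, x k ∈ minFace (cayleyPiece A P k) u) →
        ∀ k, minFace (cayleyPiece A P k) u = cayleyPiece A P k := by
  obtain ⟨-, hA, hNE⟩ := hC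
  have hne := cayleyPiece_nonempty hA
  choose V hVlat hV using hpieces
  simp only [hV] at hNE hdim hne ⊢
  obtain ⟨x, hxV, hx⟩ := exists_vertices_forall_minFace_eq_self (fun k => (V k).finite_toSet)
    (fun k => convexHull_nonempty_iff.1 (hne k)) hNE 0 (by simpa [Nat.lt_succ_iff] using hdim)
  exact ⟨x, fun k => ⟨subset_convexHull ℝ _ (hxV k), hVlat k _ (hxV k)⟩, hx⟩

theorem hasInteriorLatticePt (hP : IsLatticePolytope P) (hfull : affineSpan ℝ P = ⊤)
    (hC : IsCayleyWith P A) (hpieces : ∀ k, IsLatticePolytope (cayleyPiece A P k))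
    (hdim : fdim (cayleyPiece A P 0) ≤ t) : HasInteriorLatticePt P (t + 1) := by
  obtain ⟨x, hx, hface⟩ := hC.exists_isLatticePt_forall_minFace_eq_self hpieces hdim
  have hxP (k) : x k ∈ P := (hx k).1.1
  have ht : ((t + 1 : ℕ) : ℝ) ≠ 0 := by positivity
  set w : Fin (t + 1) → ℝ := fun _ => ((t + 1 : ℕ) : ℝ)⁻¹
  have hw (k) : 0 < w k := by positivity
  have hw1 : ∑ k, w k = 1 := by
    rw [Finset.sum_const, Finset.card_univ, Fintype.card_fin, nsmul_eq_mul, mul_inv_cancel₀ ht]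
  have hmem : ∑ k, w k • x k ∈ P := hP.convex_s11.sum_mem (fun k _ => (hw k).le) hw1 fun k _ => hxP k
  have hsum : ((t + 1 : ℕ) : ℝ) • ∑ k, w k • x k = ∑ k, x k := by
    rw [← Finset.smul_sum, smul_inv_smul₀ ht]
  refine ⟨∑ k, x k, ?_, IsLatticePt.sum fun k _ => (hx k).2⟩
  rw [interior_smul₀ ht, ← hsum]
  refine Set.smul_mem_smul_set (mem_interior_of_forall_mem_minFace hP.convex_s11
    (hP.convex_s11.interior_nonempty_iff_affineSpan_eq_top.2 hfull) hmem fun u hu => ?_)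
  have hxu (k) : x k ∈ minFace P u := mem_minFace_of_sum_mem_minFace hw hw1 hxP hu k
  have hpieces_eq := hface u fun k => ⟨(hx k).1, fun y hy => (hxu k).2 y hy.1⟩
  have hsub : ⋃ k, cayleyPiece A P k ⊆ minFace P u := Set.iUnion_subset fun k z hz =>
    ⟨hz.1, fun y hy => (((hpieces_eq k).ge hz).2 _ (hx k).1).trans ((hxu k).2 y hy)⟩
  have hker := (vectorSpan_mono ℝ hsub).trans (vectorSpan_minFace_le_ker P u)
  rw [vectorSpan_iUnion_cayleyPiece hP hfull hC.2.1, top_le_iff] at hker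
  exact LinearMap.ker_eq_top.1 hker

end IsCayleyWith

end Cayley

theorem stmt11_general {n t : ℕ} (P : Set (Fin n → ℝ)) (hP : IsLatticePolytope P)
    (hfull : affineSpan ℝ P = ⊤) (A : Matrix (Fin t) (Fin n) ℤ) (hC : IsCayleyWith P A)
    (hpieces : ∀ k : Fin (t + 1), IsLatticePolytope (cayleyPiece A P k))
    (hdim : fdim (cayleyPiece A P 0) ≤ t) (ht : 0 < t) :
    codeg P = t + 1 ∧ (sSup (muSet P))⁻¹ = (t : ℝ) + 1 := by
  have hint := hC.hasInteriorLatticePt hP hfull hpieces hdim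
  have hle {s : ℝ} (hs : s ∈ muSet P) : s ≤ ((t : ℝ) + 1)⁻¹ :=
    hC.le_inv_of_mem_muSet hP hfull hpieces ht hs
  constructor
  · refine le_antisymm (Nat.sInf_le ⟨t.succ_pos, hint⟩) (le_csInf ⟨_, t.succ_pos, hint⟩ ?_)
    rintro s ⟨hs, hsint⟩
    have hinv := hle (hP.inv_mem_muSet hs hsint)
    rw [inv_le_inv₀ (by exact_mod_cast hs) (by positivity)] at hinv
    exact_mod_cast hinv
  · have hmax : IsGreatest (muSet P) ((t : ℝ) + 1)⁻¹ :=
      ⟨by exact_mod_cast hP.inv_mem_muSet t.succ_pos hint, fun s hs => hle hs⟩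
    rw [hmax.csSup_eq, inv_inv]

/-- If a full-dimensional lattice polytope `P ⊆ ℝ^n` is a Cayley sum
`Cayley(R_0, …, R_t)_π` of normally equivalent lattice polytopes each of dimension `n - t`,
with `t > n/2`, then `cd(P) = μ(P) = t + 1 ≥ (n+3)/2`. -/
theorem stmt11 {n t : ℕ} (P : Set (Fin n → ℝ)) (hP : IsLatticePolytope P)
    (hfull : affineSpan ℝ P = ⊤) (A : Matrix (Fin t) (Fin n) ℤ)
    (hC : IsCayleyWith P A)
    (hpieces : ∀ k : Fin (t + 1), IsLatticePolytope (cayleyPiece A P k))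
    (hdim : ∀ k : Fin (t + 1), fdim (cayleyPiece A P k) = n - t)
    (ht : (n : ℝ) / 2 < (t : ℝ)) :
    codeg P = t + 1 ∧ (sSup (muSet P))⁻¹ = (t : ℝ) + 1 ∧
    ((n : ℝ) + 3) / 2 ≤ (t : ℝ) + 1 := by
  have hnt : n < 2 * t := by
    rw [div_lt_iff₀' two_pos] at ht
    exact_mod_cast ht
  obtain ⟨hcodeg, hmu⟩ :=
    stmt11_general P hP hfull A hC hpieces (by rw [hdim]; omega) (by omega)
  refine ⟨hcodeg, hmu, ?_⟩
  have hnt' : (n : ℝ) + 1 ≤ 2 * t := by exact_mod_cast hnt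
  linarith
end
end
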